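/- arXiv:1110.1713 — 2 statements merged into one kernel-verified Lean document; each statement's English description precedes it below -/
import Mathlib

section
/- There exists a constant κ > 0 such that for every atom A, the heat maximal function MA satisfies ‖MA‖₁ ≤ κ. -/
open MeasureTheory Real Filter Set
open scoped ENNReal

noncomputable section

/-- The group `G = ℝ² ⋊ ℝ⁺`, realized as triples `(x₁, x₂, a)` (only `a > 0` is relevant). -/
abbrev G : Type := ℝ × ℝ × ℝ

/-- Group product `(x₁,x₂,a)·(x₁',x₂',a') = (x₁+a x₁', x₂+a x₂', a a')`. -/
def gMul (x y : G) : G := (x.1 + x.2.2 * y.1, x.2.1 + x.2.2 * y.2.1, x.2.2 * y.2.2)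

/-- Group inverse `(x₁,x₂,a)⁻¹ = (−x₁/a, −x₂/a, 1/a)`. -/
def gInv (x : G) : G := (-x.1 / x.2.2, -x.2.1 / x.2.2, 1 / x.2.2)

/-- The identity `e = (0,0,1)`. -/
def gE : G := (0, 0, 1)

/-- The right Haar measure `dρ = a⁻¹ dx₁ dx₂ da` (supported where `a > 0`). -/
def ρG : Measure G :=
  (volume : Measure G).withDensity fun x => ENNReal.ofReal (if 0 < x.2.2 then x.2.2⁻¹ else 0)

/-- The modular function `δ(x₁,x₂,a) = a⁻²`. -/
def deltaG (x : G) : ℝ := (x.2.2 ^ 2)⁻¹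

/-- `|x| = √(x₁² + x₂²)`. -/
def normG (x : G) : ℝ := Real.sqrt (x.1 ^ 2 + x.2.1 ^ 2)

/-- `cosh r(x) = (a + a⁻¹ + a⁻¹|x|²)/2`. -/
def coshArg (x : G) : ℝ := (x.2.2 + x.2.2⁻¹ + x.2.2⁻¹ * (x.1 ^ 2 + x.2.1 ^ 2)) / 2

/-- `r(x) ≥ 0` is determined by `cosh r(x) = coshArg x`; explicitly `r = arcosh (coshArg x)`. -/
def rG (x : G) : ℝ := Real.log (coshArg x + Real.sqrt (coshArg x ^ 2 - 1))

/-- The left-invariant distance `d(x,y) = r(x⁻¹y)`. -/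
def dG (x y : G) : ℝ := rG (gMul (gInv x) y)

/-- The heat kernel
`p_t(x) = (8π^{3/2})⁻¹ δ(x)^{1/2} (r(x)/sinh r(x)) t^{−3/2} exp(−r(x)²/(4t))`,
with `r/sinh r := 1` at `x = e`. -/
def heatK (t : ℝ) (x : G) : ℝ :=
  (8 * Real.pi ^ ((3 : ℝ)/2))⁻¹ * Real.sqrt (deltaG x) *
    (if rG x = 0 then 1 else rG x / Real.sinh (rG x)) *
    t ^ (-(3 : ℝ)/2) * Real.exp (-(rG x ^ 2) / (4 * t))

/-- Convolution `f ∗ p_t(x) = ∫ f(xy⁻¹) p_t(y) dρ(y)`. -/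
def convHeat (f : G → ℝ) (t : ℝ) (x : G) : ℝ := ∫ y, f (gMul x (gInv y)) * heatK t y ∂ρG

/-- The heat maximal operator `Mf(x) = sup_{t>0} |f ∗ p_t(x)|` (valued in `ℝ≥0∞`). -/
def maxHeat (f : G → ℝ) (x : G) : ℝ≥0∞ :=
  ⨆ (t : ℝ) (_ : 0 < t), ENNReal.ofReal |convHeat f t x|

/-- Calderón–Zygmund sets. -/
def IsCZ (R : Set G) : Prop :=
  ∃ c : G, ∃ L r : ℝ, 0 < c.2.2 ∧ 0 < L ∧ 0 < r ∧
    R = Set.Icc (c.1 - L/2) (c.1 + L/2) ×ˢ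
        (Set.Icc (c.2.1 - L/2) (c.2.1 + L/2) ×ˢ
         Set.Icc (c.2.2 * Real.exp (-r)) (c.2.2 * Real.exp r)) ∧
    (r < 1 → Real.exp 2 * c.2.2 * r ≤ L ∧ L < Real.exp 8 * c.2.2 * r) ∧
    (1 ≤ r → c.2.2 * Real.exp (2*r) ≤ L ∧ L < c.2.2 * Real.exp (8*r))

/-- Atoms: `A ∈ L¹(ρ)` supported in a Calderón–Zygmund set `R`, with
`‖A‖_∞ ≤ ρ(R)⁻¹` and `∫ A dρ = 0`. -/
def IsAtomG (A : G → ℝ) : Prop :=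
  Integrable A ρG ∧
  ∃ R : Set G, IsCZ R ∧ (∀ x ∉ R, A x = 0) ∧
    eLpNorm A ⊤ ρG ≤ (ρG R)⁻¹ ∧
    ∫ x, A x ∂ρG = 0

/-- `f = Σ_j lam_j A_j` with atoms `A_j`, `Σ_j |lam_j| < ∞`, converging in `L¹(ρ)`. -/
def IsH1Decomp (f : G → ℝ) (lam : ℕ → ℝ) (A : ℕ → G → ℝ) : Prop :=
  (∀ j, IsAtomG (A j)) ∧ Summable (fun j => |lam j|) ∧
  Tendsto (fun N => eLpNorm (fun x => f x - ∑ j ∈ Finset.range N, lam j * A j x) 1 ρG)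
    atTop (nhds 0)

/-- The Hardy space `H¹`. -/
def MemH1 (f : G → ℝ) : Prop :=
  Integrable f ρG ∧ ∃ lam A, IsH1Decomp f lam A

/-- `‖f‖_{H¹} = inf Σ_j |lam_j|` over all atomic decompositions. -/
def H1norm (f : G → ℝ) : ℝ :=
  sInf {s | ∃ lam A, IsH1Decomp f lam A ∧ s = ∑' j, |lam j|}

/-- The left-invariant vector field `X₀ = a ∂_a`. -/
def X0 (f : G → ℝ) (x : G) : ℝ := x.2.2 * deriv (fun s => f (x.1, x.2.1, s)) x.2.2

/-- The left-invariant vector field `X₁ = a ∂_{x₁}`. -/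
def X1 (f : G → ℝ) (x : G) : ℝ := x.2.2 * deriv (fun s => f (s, x.2.1, x.2.2)) x.1

/-- The left-invariant vector field `X₂ = a ∂_{x₂}`. -/
def X2 (f : G → ℝ) (x : G) : ℝ := x.2.2 * deriv (fun s => f (x.1, s, x.2.2)) x.2.1

/-- `‖∇p_t(x)‖`, the Euclidean norm of `(X₀p_t, X₁p_t, X₂p_t)` at `x`. -/
def gradHeatNorm (t : ℝ) (x : G) : ℝ :=
  Real.sqrt (X0 (heatK t) x ^ 2 + X1 (heatK t) x ^ 2 + X2 (heatK t) x ^ 2)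

/-- The Poisson kernel `q_t(x) = π⁻² δ(x)^{1/2} (r(x)/sinh r(x)) · t/(t²+r(x)²)²`. -/
def poissonK (t : ℝ) (x : G) : ℝ :=
  (Real.pi ^ 2)⁻¹ * Real.sqrt (deltaG x) *
    (if rG x = 0 then 1 else rG x / Real.sinh (rG x)) *
    (t / (t ^ 2 + rG x ^ 2) ^ 2)

/-- Convolution `f ∗ q_t(x) = ∫ f(xy⁻¹) q_t(y) dρ(y)`. -/
def convPoisson (f : G → ℝ) (t : ℝ) (x : G) : ℝ := ∫ y, f (gMul x (gInv y)) * poissonK t y ∂ρG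

/-- The Poisson maximal operator `M̃f(x) = sup_{t>0} |f ∗ q_t(x)|`. -/
def maxPoisson (f : G → ℝ) (x : G) : ℝ≥0∞ :=
  ⨆ (t : ℝ) (_ : 0 < t), ENNReal.ofReal |convPoisson f t x|

/-- `G_{r₁}(x) = sup_{z ∈ B(x,r₁/2)} sup_{t>0} ‖∇p_t(z)‖`. -/
def Gsup (r1 : ℝ) (x : G) : ℝ≥0∞ :=
  ⨆ (z : G) (_ : 0 < z.2.2 ∧ dG x z < r1 / 2) (t : ℝ) (_ : 0 < t),
    ENNReal.ofReal (gradHeatNorm t z)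

/-- `R₀ = [−1,1]×[−1,1]×[e⁻¹,e]`. -/
def R0set : Set G :=
  Set.Icc (-1 : ℝ) 1 ×ˢ (Set.Icc (-1 : ℝ) 1 ×ˢ Set.Icc (Real.exp (-1)) (Real.exp 1))

/-- `R_L = [L−1,L+1]×[−1,1]×[e⁻¹,e]`. -/
def RLset (L : ℝ) : Set G :=
  Set.Icc (L - 1) (L + 1) ×ˢ (Set.Icc (-1 : ℝ) 1 ×ˢ Set.Icc (Real.exp (-1)) (Real.exp 1))

/-- `f_L = χ_{R_L} − χ_{R₀}`. -/
def fL (L : ℝ) : G → ℝ := fun x =>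
  (RLset L).indicator (fun _ => (1 : ℝ)) x - R0set.indicator (fun _ => (1 : ℝ)) x

/-- The mean of `g` over `R` with respect to `ρ`. -/
def czMean (g : G → ℝ) (R : Set G) : ℝ := (∫ x in R, g x ∂ρG) / (ρG R).toReal

/-- `‖g‖_{BMO} = sup_R ρ(R)⁻¹ ∫_R |g − g_R| dρ` over Calderón–Zygmund sets `R`. -/
def czBMO (g : G → ℝ) : ℝ≥0∞ :=
  ⨆ (R : Set G) (_ : IsCZ R),
    (ρG R)⁻¹ * ∫⁻ x in R, ENNReal.ofReal |g x - czMean g R| ∂ρG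

/-- `‖h‖_{BMO(ℝ)} = sup_Q |Q|⁻¹ ∫_Q |h − h_Q|` over bounded intervals `Q ⊂ ℝ`. -/
def lineBMO (h : ℝ → ℝ) : ℝ≥0∞ :=
  ⨆ (a : ℝ) (b : ℝ) (_ : a < b),
    (ENNReal.ofReal (b - a))⁻¹ *
      ∫⁻ s in Set.Icc a b, ENNReal.ofReal |h s - (∫ u in Set.Icc a b, h u) / (b - a)|

/-- `2R₀ = [−2,2]×[−2,2]×[e⁻²,e²]`. -/
def twoR0set : Set G :=
  Set.Icc (-2 : ℝ) 2 ×ˢ (Set.Icc (-2 : ℝ) 2 ×ˢ Set.Icc (Real.exp (-2)) (Real.exp 2))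

/-- The set `{x₁ > 3, |x₂| < 1, e⁻¹ < a < e}`. -/
def domSpecial : Set G :=
  {x : G | 3 < x.1 ∧ |x.2.1| < 1 ∧ Real.exp (-1) < x.2.2 ∧ x.2.2 < Real.exp 1}

/-- The function equal to `1/(x₁ (log x₁)^{3/2})` on `{x₁ > 3, |x₂| < 1, e⁻¹ < a < e}`,
to `c₀` on `R₀`, and `0` elsewhere. -/
def fSpecial (c0 : ℝ) : G → ℝ := fun x =>
  domSpecial.indicator (fun y => (y.1 * Real.log y.1 ^ ((3 : ℝ)/2))⁻¹) x
    + R0set.indicator (fun _ => c0) x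

/-!
After the substitution `w = x y⁻¹`, the operator `f ↦ f ∗ p_t` has a kernel that depends only on
the heights of `x` and `w` and on `d = d(x, w)`, and in polar coordinates around `w` its heights
cancel against the area density. For an atom supported in a box of radius `r`, three regions of `x`
are treated separately.

* On the doubled box, `‖A‖_∞ ≤ ρ(R)⁻¹` and the total mass `1` of the kernel suffice.
* Where `d(x, ·)` is comparable to `r`, the supremum over `t` of the kernel has a radial density of
  order `1 / d`, whose integral from `r / 4` to a multiple of `r` is bounded.
* Far away, `∫ A = 0` allows one to subtract the value of the kernel at a common point high above
  the box, which a Euclidean segment of hyperbolic length of order `r` joins to any point of the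
  box. The gradient of the kernel has integral of order `1 / r`, uniformly in `t`: the derivatives
  of the two factors of `(a sinh d)⁻¹` cancel except where `x` lies almost straight below the
  segment, and that set is small.
-/

section Distance

/-- `coshDist x w = cosh d(x, w)`, the rational function of the coordinates by which the distance is
handled; on points of positive height it is given by `coshDist_eq`. -/
def coshDist (x w : G) : ℝ := coshArg (gMul (gInv x) w)

lemma dG_eq_arcosh (x w : G) : dG x w = arcosh (coshDist x w) := rfl

variable {x w c : G}

lemma coshDist_eq (hx : 0 < x.2.2) (hw : 0 < w.2.2) :
    coshDist x w =
      (x.2.2 ^ 2 + w.2.2 ^ 2 + ((x.1 - w.1) ^ 2 + (x.2.1 - w.2.1) ^ 2)) / (2 * x.2.2 * w.2.2) := by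
  simp only [coshDist, coshArg, gMul, gInv]
  field_simp
  ring

lemma coshDist_comm (hx : 0 < x.2.2) (hw : 0 < w.2.2) : coshDist x w = coshDist w x := by
  rw [coshDist_eq hx hw, coshDist_eq hw hx]
  congr 1 <;> ring

lemma one_le_coshDist (hx : 0 < x.2.2) (hw : 0 < w.2.2) : 1 ≤ coshDist x w := by
  rw [coshDist_eq hx hw, one_le_div (by positivity)]
  nlinarith only [sq_nonneg (x.2.2 - w.2.2), sq_nonneg (x.1 - w.1), sq_nonneg (x.2.1 - w.2.1)]

lemma coshDist_eq_one_iff (hx : 0 < x.2.2) (hw : 0 < w.2.2) : coshDist x w = 1 ↔ x = w := by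
  rw [coshDist_eq hx hw, div_eq_one_iff_eq (by positivity)]
  refine ⟨fun h ↦ ?_, ?_⟩
  · have hsum : (x.2.2 - w.2.2) ^ 2 + (x.1 - w.1) ^ 2 + (x.2.1 - w.2.1) ^ 2 = 0 := by
      linear_combination h
    obtain ⟨h₁, h₂, h₃⟩ : x.1 = w.1 ∧ x.2.1 = w.2.1 ∧ x.2.2 = w.2.2 := by
      refine ⟨?_, ?_, ?_⟩ <;>
        nlinarith only [hsum, sq_nonneg (x.2.2 - w.2.2), sq_nonneg (x.1 - w.1),
          sq_nonneg (x.2.1 - w.2.1)]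
    exact Prod.ext h₁ (Prod.ext h₂ h₃)
  · rintro rfl
    ring

lemma dG_comm (hx : 0 < x.2.2) (hw : 0 < w.2.2) : dG x w = dG w x := by
  rw [dG_eq_arcosh, dG_eq_arcosh, coshDist_comm hx hw]

lemma dG_nonneg (hx : 0 < x.2.2) (hw : 0 < w.2.2) : 0 ≤ dG x w :=
  arcosh_nonneg (one_le_coshDist hx hw)

lemma dG_eq_zero_iff (hx : 0 < x.2.2) (hw : 0 < w.2.2) : dG x w = 0 ↔ x = w := by
  rw [dG_eq_arcosh, arcosh_eq_zero_iff (one_le_coshDist hx hw), coshDist_eq_one_iff hx hw]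

lemma cosh_dG (hx : 0 < x.2.2) (hw : 0 < w.2.2) : cosh (dG x w) = coshDist x w :=
  cosh_arcosh (one_le_coshDist hx hw)

lemma sinh_dG_nonneg (hx : 0 < x.2.2) (hw : 0 < w.2.2) : 0 ≤ sinh (dG x w) :=
  sinh_nonneg_iff.2 (dG_nonneg hx hw)

lemma sq_sinh_dG (hx : 0 < x.2.2) (hw : 0 < w.2.2) :
    sinh (dG x w) ^ 2 = coshDist x w ^ 2 - 1 := by
  rw [sinh_sq, cosh_dG hx hw]

lemma dG_le_iff (hx : 0 < x.2.2) (hw : 0 < w.2.2) {v : ℝ} (hv : 0 ≤ v) :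
    dG x w ≤ v ↔ coshDist x w ≤ cosh v := by
  rw [← cosh_dG hx hw, cosh_le_cosh, abs_of_nonneg (dG_nonneg hx hw), abs_of_nonneg hv]

lemma le_dG_iff (hx : 0 < x.2.2) (hw : 0 < w.2.2) {v : ℝ} (hv : 0 ≤ v) :
    v ≤ dG x w ↔ cosh v ≤ coshDist x w := by
  rw [← cosh_dG hx hw, cosh_le_cosh, abs_of_nonneg (dG_nonneg hx hw), abs_of_nonneg hv]

-- In the hyperboloid model the left side is the Lorentz product of the tangential parts of `x` and
-- `w` at `c`, so this is the Cauchy–Schwarz inequality; the squares below are Lagrange's.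
lemma sq_coshDist_mul_sub_le (hx : 0 < x.2.2) (hc : 0 < c.2.2) (hw : 0 < w.2.2) :
    (coshDist x c * coshDist c w - coshDist x w) ^ 2 ≤
      (coshDist x c ^ 2 - 1) * (coshDist c w ^ 2 - 1) := by
  rw [coshDist_eq hx hc, coshDist_eq hc hw, coshDist_eq hx hw]
  set A := x.2.2 ^ 2 + (x.1 - c.1) ^ 2 + (x.2.1 - c.2.1) ^ 2 with hA
  set B := w.2.2 ^ 2 + (w.1 - c.1) ^ 2 + (w.2.1 - c.2.1) ^ 2 with hB
  rw [← sub_nonneg]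
  have lagrange : 0 ≤
      (((c.2.2 ^ 2 - A) * (w.1 - c.1) - (x.1 - c.1) * (c.2.2 ^ 2 - B)) ^ 2
        + ((c.2.2 ^ 2 - A) * (w.2.1 - c.2.1) - (x.2.1 - c.2.1) * (c.2.2 ^ 2 - B)) ^ 2
        + (2 * c.2.2 * ((x.1 - c.1) * (w.2.1 - c.2.1) - (x.2.1 - c.2.1) * (w.1 - c.1))) ^ 2)
      / (2 * c.2.2 * x.2.2 * w.2.2) ^ 2 := by positivity
  refine lagrange.trans_eq ?_
  rw [hA, hB]
  field_simp
  ring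

lemma dG_triangle (hx : 0 < x.2.2) (hc : 0 < c.2.2) (hw : 0 < w.2.2) :
    dG x w ≤ dG x c + dG c w := by
  rw [dG_le_iff hx hw (add_nonneg (dG_nonneg hx hc) (dG_nonneg hc hw)), cosh_add, cosh_dG hx hc,
    cosh_dG hc hw]
  have key := sq_coshDist_mul_sub_le hx hc hw
  rw [← sq_sinh_dG hx hc, ← sq_sinh_dG hc hw, ← mul_pow] at key
  linarith [neg_le_of_abs_le
    (abs_le_of_sq_le_sq key (mul_nonneg (sinh_dG_nonneg hx hc) (sinh_dG_nonneg hc hw)))]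

lemma dG_of_base_eq (hx : 0 < x.2.2) (hw : 0 < w.2.2) (h₁ : x.1 = w.1) (h₂ : x.2.1 = w.2.1) :
    dG x w = |log (w.2.2 / x.2.2)| := by
  have h : coshDist x w = cosh |log (w.2.2 / x.2.2)| := by
    rw [cosh_abs, cosh_log (by positivity), coshDist_eq hx hw, h₁, h₂]
    field_simp
    ring
  rw [dG_eq_arcosh, h, arcosh_cosh (abs_nonneg _)]

lemma one_add_half_sq_le_cosh (η : ℝ) : 1 + η ^ 2 / 2 ≤ cosh η := by
  have h : |η / 2| ≤ sinh |η / 2| := self_le_sinh_iff.2 (abs_nonneg _)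
  have h' : (η / 2) ^ 2 ≤ sinh (η / 2) ^ 2 := by
    rwa [sq_le_sq, abs_sinh]
  have := cosh_two_mul (η / 2)
  rw [mul_div_cancel₀ η two_ne_zero, cosh_sq] at this
  linarith

lemma dG_le_of_height_eq (hx : 0 < x.2.2) (h₃ : x.2.2 = w.2.2) {η : ℝ} (hη : 0 ≤ η)
    (h : (x.1 - w.1) ^ 2 + (x.2.1 - w.2.1) ^ 2 ≤ (η * w.2.2) ^ 2) : dG x w ≤ η := by
  have hw : 0 < w.2.2 := h₃ ▸ hx
  rw [dG_le_iff hx hw hη, coshDist_eq hx hw, h₃]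
  refine le_trans ?_ (one_add_half_sq_le_cosh η)
  rw [div_le_iff₀ (by positivity)]
  linarith

lemma abs_log_height_le_dG (hx : 0 < x.2.2) (hw : 0 < w.2.2) : |log (w.2.2 / x.2.2)| ≤ dG x w := by
  rw [le_dG_iff hx hw (abs_nonneg _), cosh_abs, cosh_log (by positivity), coshDist_eq hx hw,
    ← sub_nonneg]
  have h : 0 ≤ ((x.1 - w.1) ^ 2 + (x.2.1 - w.2.1) ^ 2) / (2 * x.2.2 * w.2.2) := by positivity
  refine h.trans_eq ?_
  field_simp
  ring

@[fun_prop]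
lemma measurable_dG : Measurable fun p : G × G ↦ dG p.1 p.2 := by
  unfold dG rG coshArg gMul gInv
  fun_prop

end Distance

section Measure

instance sFinite_ρG : SFinite ρG := by
  unfold ρG
  infer_instance

lemma ae_ne_ρG (p : G) : ∀ᵐ x ∂ρG, x ≠ p := by
  refine withDensity_absolutelyContinuous _ _ ?_
  rw [Measure.volume_eq_prod]
  exact Measure.ae_ne _ p

lemma measurable_density_ρG :
    Measurable fun x : G ↦ ENNReal.ofReal (if 0 < x.2.2 then x.2.2⁻¹ else 0) :=
  ENNReal.measurable_ofReal.comp <|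
    Measurable.ite (measurableSet_lt measurable_const (by fun_prop)) (by fun_prop) (by fun_prop)

lemma ae_height_pos : ∀ᵐ x ∂ρG, 0 < x.2.2 := by
  rw [ρG, ae_withDensity_iff measurable_density_ρG]
  refine Eventually.of_forall fun x hx ↦ ?_
  by_contra h
  simp [h] at hx

lemma lintegral_ρG_eq_setLIntegral {F : G → ℝ≥0∞} (hF : Measurable F) :
    ∫⁻ x, F x ∂ρG = ∫⁻ a in Ioi (0 : ℝ), ENNReal.ofReal a⁻¹ * ∫⁻ q : ℝ × ℝ, F (q.1, q.2, a) := by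
  have hm := measurable_density_ρG
  rw [ρG, lintegral_withDensity_eq_lintegral_mul _ hm hF,
    ← (volume_preserving_prodAssoc (α₁ := ℝ) (β₁ := ℝ) (γ₁ := ℝ)).lintegral_comp (hm.mul hF),
    Measure.volume_eq_prod, lintegral_prod_symm,
    ← lintegral_indicator measurableSet_Ioi]
  swap
  · exact ((hm.mul hF).comp MeasurableEquiv.prodAssoc.measurable).aemeasurable
  refine lintegral_congr fun a ↦ ?_
  by_cases ha : 0 < a
  · rw [indicator_of_mem (show a ∈ Ioi 0 from ha), ← lintegral_const_mul _ (by fun_prop)]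
    simp [ha, MeasurableEquiv.prodAssoc]
  · rw [indicator_of_notMem (by simpa using ha)]
    simp [ha, MeasurableEquiv.prodAssoc]

lemma lintegral_ρG {F : G → ℝ≥0∞} (hF : Measurable F) :
    ∫⁻ x, F x ∂ρG = ∫⁻ u : ℝ, ∫⁻ q : ℝ × ℝ, F (q.1, q.2, exp u) := by
  rw [lintegral_ρG_eq_setLIntegral hF, ← range_exp, ← image_univ,
    lintegral_image_eq_lintegral_abs_deriv_mul MeasurableSet.univ
      (fun u _ ↦ (hasDerivAt_exp u).hasDerivWithinAt) exp_injective.injOn, setLIntegral_univ]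
  refine lintegral_congr fun u ↦ ?_
  rw [← mul_assoc, ← ENNReal.ofReal_mul (abs_nonneg _), abs_of_pos (exp_pos u),
    mul_inv_cancel₀ (exp_ne_zero u), ENNReal.ofReal_one, one_mul]

lemma ρG_prod {s t v : Set ℝ} (hs : MeasurableSet s) (ht : MeasurableSet t)
    (hv : MeasurableSet v) :
    ρG (s ×ˢ (t ×ˢ v)) = volume (exp ⁻¹' v) * (volume s * volume t) := by
  rw [← lintegral_indicator_one (hs.prod (ht.prod hv)),
    lintegral_ρG (measurable_one.indicator (hs.prod (ht.prod hv))), ← Measure.prod_prod,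
    mul_comm, ← setLIntegral_const, ← lintegral_indicator (measurable_exp hv)]
  refine lintegral_congr fun u ↦ ?_
  by_cases hu : exp u ∈ v
  · rw [indicator_of_mem (show u ∈ exp ⁻¹' v from hu), ← Measure.volume_eq_prod,
      ← lintegral_indicator_one (hs.prod ht)]
    refine lintegral_congr fun q ↦ ?_
    by_cases hq : q ∈ s ×ˢ t
    · rw [indicator_of_mem hq,
        indicator_of_mem (show (q.1, q.2, exp u) ∈ s ×ˢ (t ×ˢ v) from ⟨hq.1, hq.2, hu⟩)]
      rfl
    · rw [indicator_of_notMem hq, indicator_of_notMem fun h ↦ hq ⟨h.1, h.2.1⟩]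
  · rw [indicator_of_notMem (show u ∉ exp ⁻¹' v from hu)]
    simp [indicator, mem_prod, hu]

end Measure

section Polar

lemma lintegral_comp_sq_sub_add_sq_sub {g : ℝ → ℝ≥0∞} (hg : Measurable g) (p₁ p₂ : ℝ) :
    ∫⁻ q : ℝ × ℝ, g ((q.1 - p₁) ^ 2 + (q.2 - p₂) ^ 2) =
      ENNReal.ofReal (2 * π) * ∫⁻ s in Ioi (0 : ℝ), ENNReal.ofReal s * g (s ^ 2) := by
  have htrans := lintegral_sub_right_eq_self (μ := (volume : Measure (ℝ × ℝ)))
    (fun q : ℝ × ℝ ↦ g (q.1 ^ 2 + q.2 ^ 2)) (p₁, p₂)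
  simp only [Prod.fst_sub, Prod.snd_sub] at htrans
  have hpolar (s θ : ℝ) : ENNReal.ofReal s • g ((polarCoord.symm (s, θ)).1 ^ 2
      + (polarCoord.symm (s, θ)).2 ^ 2) = ENNReal.ofReal s * g (s ^ 2) := by
    rw [polarCoord_symm_apply, smul_eq_mul]
    dsimp only
    rw [mul_pow, mul_pow, ← mul_add, cos_sq_add_sin_sq, mul_one]
  rw [htrans, ← lintegral_comp_polarCoord_symm, polarCoord_target, Measure.volume_eq_prod,
    ← Measure.prod_restrict, lintegral_prod]
  · simp only [hpolar, lintegral_const, Measure.restrict_apply MeasurableSet.univ, univ_inter,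
      Real.volume_Ioo]
    rw [lintegral_mul_const _ (by fun_prop), mul_comm]
    congr 2
    ring
  · have := continuous_polarCoord_symm.measurable
    simp only [smul_eq_mul]
    fun_prop

lemma lintegral_comp_sq_mul {g : ℝ → ℝ≥0∞} (hg : Measurable g) :
    2 * ∫⁻ s in Ioi (0 : ℝ), ENNReal.ofReal s * g (s ^ 2) = ∫⁻ y in Ioi (0 : ℝ), g y := by
  have himage : (fun s : ℝ ↦ s ^ 2) '' Ioi 0 = Ioi 0 := by
    ext y
    refine ⟨?_, fun hy ↦ ⟨√y, sqrt_pos.2 hy, sq_sqrt (le_of_lt hy)⟩⟩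
    rintro ⟨s, hs, rfl⟩
    exact pow_pos (mem_Ioi.1 hs) 2
  have hinj : InjOn (fun s : ℝ ↦ s ^ 2) (Ioi 0) := fun s hs t ht h ↦
    (pow_left_inj₀ (le_of_lt hs) (le_of_lt ht) two_ne_zero).1 h
  conv_rhs => rw [← himage, lintegral_image_eq_lintegral_abs_deriv_mul measurableSet_Ioi
    (fun s _ ↦ (hasDerivAt_pow 2 s).hasDerivWithinAt) hinj]
  rw [← lintegral_const_mul _ (by fun_prop)]
  refine setLIntegral_congr_fun measurableSet_Ioi fun s hs ↦ ?_
  rw [← mul_assoc, abs_of_pos (by have := mem_Ioi.1 hs; positivity), ← ENNReal.ofReal_ofNat 2,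
    ← ENNReal.ofReal_mul zero_le_two]
  simp

lemma image_cosh_sub_Ioi {a e : ℝ} (ha : 0 < a) (he : 0 < e) :
    (fun d ↦ 2 * a * e * cosh d - (a ^ 2 + e ^ 2)) '' Ioi |log (e / a)| = Ioi 0 := by
  have hlog : 2 * a * e * cosh |log (e / a)| = a ^ 2 + e ^ 2 := by
    rw [cosh_abs, cosh_log (by positivity)]
    field_simp
    ring
  ext y
  constructor
  · rintro ⟨d, hd, rfl⟩
    have hd : |log (e / a)| < d := hd
    have : cosh |log (e / a)| < cosh d := by
      rwa [cosh_lt_cosh, abs_abs, abs_of_pos ((abs_nonneg _).trans_lt hd)]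
    rw [mem_Ioi, ← hlog, sub_pos]
    gcongr
  · intro hy
    have hy : 0 < y := hy
    have hC : cosh |log (e / a)| < (y + (a ^ 2 + e ^ 2)) / (2 * a * e) := by
      rw [lt_div_iff₀ (by positivity), mul_comm, hlog]
      linarith
    have hC₁ := (one_le_cosh _).trans hC.le
    refine ⟨arcosh ((y + (a ^ 2 + e ^ 2)) / (2 * a * e)), ?_, ?_⟩
    · rwa [← cosh_arcosh hC₁, cosh_lt_cosh, abs_abs, abs_of_nonneg (arcosh_nonneg hC₁)] at hC
    · dsimp only
      rw [cosh_arcosh hC₁, mul_div_cancel₀ _ (by positivity)]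
      ring

-- The circle of radius `√y` around `(p₁, p₂)` at height `a` is the intersection of that horizontal
-- plane with the sphere of radius `d` around `(p₁, p₂, e)`, where `y = 2ae cosh d - (a² + e²)`.
lemma lintegral_plane_eq_lintegral_cosh {a e : ℝ} (ha : 0 < a) (he : 0 < e) {F : ℝ → ℝ≥0∞}
    (hF : Measurable F) (p₁ p₂ : ℝ) :
    ∫⁻ q : ℝ × ℝ, F ((a ^ 2 + e ^ 2 + ((q.1 - p₁) ^ 2 + (q.2 - p₂) ^ 2)) / (2 * a * e)) =
      ENNReal.ofReal (2 * π) *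
        ∫⁻ d in Ioi |log (e / a)|, ENNReal.ofReal (a * e * sinh d) * F (cosh d) := by
  have hpos : ∀ d ∈ Ioi |log (e / a)|, 0 < d := fun d hd ↦ (abs_nonneg _).trans_lt hd
  have hderiv : ∀ d ∈ Ioi |log (e / a)|, HasDerivWithinAt
      (fun d ↦ 2 * a * e * cosh d - (a ^ 2 + e ^ 2)) (2 * a * e * sinh d) (Ioi |log (e / a)|) d :=
    fun d _ ↦ (((hasDerivAt_cosh d).const_mul _).sub_const _).hasDerivWithinAt
  have hinj : InjOn (fun d ↦ 2 * a * e * cosh d - (a ^ 2 + e ^ 2)) (Ioi |log (e / a)|) := by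
    intro d hd d' hd' h
    refine cosh_injOn (hpos d hd).le (hpos d' hd').le ?_
    exact mul_left_cancel₀ (by positivity) (sub_left_injective h)
  rw [lintegral_comp_sq_sub_add_sq_sub
      (g := fun y ↦ F ((a ^ 2 + e ^ 2 + y) / (2 * a * e))) (by fun_prop),
    ← (ENNReal.mul_right_inj two_ne_zero ENNReal.ofNat_ne_top), mul_left_comm,
    lintegral_comp_sq_mul (g := fun y ↦ F ((a ^ 2 + e ^ 2 + y) / (2 * a * e))) (by fun_prop),
    ← image_cosh_sub_Ioi ha he, lintegral_image_eq_lintegral_abs_deriv_mul measurableSet_Ioi hderiv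
      hinj, mul_left_comm 2, ← lintegral_const_mul 2 (by fun_prop)]
  congr 1
  refine setLIntegral_congr_fun measurableSet_Ioi fun d hd ↦ ?_
  have hsinh : 0 ≤ sinh d := sinh_nonneg_iff.2 (hpos d hd).le
  rw [← mul_assoc, abs_of_nonneg (by positivity), add_sub_cancel,
    mul_div_cancel_left₀ _ (by positivity), ← ENNReal.ofReal_ofNat 2,
    ← ENNReal.ofReal_mul zero_le_two]
  congr 2
  ring

/-- The kernel on `G × G` with profile `H`, a function of the distance and of the logarithm of the
ratio of heights. The weight in front is the reciprocal of the area density in the polar coordinates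
of `lintegral_radialKernel`; it is `0` on the diagonal, a null set, because `x / 0 = 0`. -/
def radialKernel (H : ℝ × ℝ → ℝ≥0∞) (x p : G) : ℝ≥0∞ :=
  ENNReal.ofReal ((x.2.2 * p.2.2)⁻¹ / sinh (dG x p)) * H (dG x p, log (p.2.2 / x.2.2))

lemma measurable_uncurry_radialKernel {H : ℝ × ℝ → ℝ≥0∞} (hH : Measurable H) :
    Measurable fun q : G × G ↦ radialKernel H q.1 q.2 := by
  unfold radialKernel
  fun_prop

lemma lintegral_lintegral_Ioi_abs {H : ℝ × ℝ → ℝ≥0∞} (hH : Measurable H) :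
    ∫⁻ b, ∫⁻ d in Ioi |b|, H (d, b) = ∫⁻ d in Ioi (0 : ℝ), ∫⁻ b in Ioo (-d) d, H (d, b) := by
  have hmeas : MeasurableSet {p : ℝ × ℝ | |p.2| < p.1} :=
    measurableSet_lt (continuous_abs.measurable.comp measurable_snd) measurable_fst
  have hind : Measurable ({p : ℝ × ℝ | |p.2| < p.1}.indicator H) := hH.indicator hmeas
  calc ∫⁻ b, ∫⁻ d in Ioi |b|, H (d, b)
      = ∫⁻ b, ∫⁻ d, {p : ℝ × ℝ | |p.2| < p.1}.indicator H (d, b) :=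
        lintegral_congr fun b ↦ (lintegral_indicator measurableSet_Ioi _).symm
    _ = ∫⁻ d, ∫⁻ b, {p : ℝ × ℝ | |p.2| < p.1}.indicator H (d, b) :=
        lintegral_lintegral_swap (hind.comp measurable_swap).aemeasurable
    _ = ∫⁻ d, ∫⁻ b in Ioo (-d) d, H (d, b) := by
        refine lintegral_congr fun d ↦ ?_
        rw [← lintegral_indicator measurableSet_Ioo]
        simp only [indicator, mem_ofPred_eq, abs_lt, mem_Ioo]
    _ = ∫⁻ d in Ioi (0 : ℝ), ∫⁻ b in Ioo (-d) d, H (d, b) := by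
        refine (setLIntegral_eq_of_support_subset fun d hd ↦ ?_).symm
        by_contra hd₀
        rw [mem_Ioi, not_lt] at hd₀
        exact hd (by simp [Ioo_eq_empty_of_le (show d ≤ -d by linarith)])

lemma lintegral_radialKernel {p : G} (hp : 0 < p.2.2) {H : ℝ × ℝ → ℝ≥0∞} (hH : Measurable H) :
    ∫⁻ x, radialKernel H x p ∂ρG =
      ENNReal.ofReal (2 * π) * ∫⁻ d in Ioi (0 : ℝ), ∫⁻ b in Ioo (-d) d, H (d, b) := by
  have harcosh : Measurable arcosh := by unfold arcosh; fun_prop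
  have hslice (u : ℝ) : ∫⁻ q : ℝ × ℝ, radialKernel H (q.1, q.2, exp u) p =
      ENNReal.ofReal (2 * π) * ∫⁻ d in Ioi |log p.2.2 - u|, H (d, log p.2.2 - u) := by
    have hlog : log (p.2.2 / exp u) = log p.2.2 - u := by
      rw [log_div hp.ne' (exp_ne_zero u), log_exp]
    have hcosh (q : ℝ × ℝ) : coshDist (q.1, q.2, exp u) p = (exp u ^ 2 + p.2.2 ^ 2 +
        ((q.1 - p.1) ^ 2 + (q.2 - p.2.1) ^ 2)) / (2 * exp u * p.2.2) := coshDist_eq (exp_pos u) hp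
    simp only [radialKernel, dG_eq_arcosh, hcosh]
    rw [lintegral_plane_eq_lintegral_cosh (exp_pos u) hp (F := fun C ↦
      ENNReal.ofReal ((exp u * p.2.2)⁻¹ / sinh (arcosh C)) * H (arcosh C, log (p.2.2 / exp u)))
      (by fun_prop), hlog]
    congr 1
    refine setLIntegral_congr_fun measurableSet_Ioi fun d hd ↦ ?_
    have hd : 0 < d := (abs_nonneg _).trans_lt hd
    have : 0 < sinh d := sinh_pos_iff.2 hd
    rw [arcosh_cosh hd.le, ← mul_assoc, ← ENNReal.ofReal_mul (by positivity)]
    field_simp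
    simp
  rw [lintegral_ρG (F := fun x ↦ radialKernel H x p)
    ((measurable_uncurry_radialKernel hH).comp measurable_prodMk_right)]
  simp only [hslice]
  rw [lintegral_const_mul' _ _ ENNReal.ofReal_ne_top,
    lintegral_sub_left_eq_self (fun b ↦ ∫⁻ d in Ioi |b|, H (d, b)), lintegral_lintegral_Ioi_abs hH]

end Polar

section HeatKernel

lemma lintegral_sub_mul_sub_mul {k : ℝ} (hk : 0 < k) (c₁ c₂ : ℝ) {F : ℝ × ℝ → ℝ≥0∞}
    (hF : Measurable F) :
    ∫⁻ q : ℝ × ℝ, F (c₁ - k * q.1, c₂ - k * q.2) = ENNReal.ofReal (k ^ 2)⁻¹ * ∫⁻ q, F q := by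
  have hmap : ∫⁻ q : ℝ × ℝ, F ((c₁, c₂) - q) ∂(Measure.map (k • ·) volume) =
      ∫⁻ q : ℝ × ℝ, F (c₁ - k * q.1, c₂ - k * q.2) := by
    rw [lintegral_map (by fun_prop) (by fun_prop)]
    rfl
  rw [← hmap, Measure.map_addHaar_smul _ hk.ne', lintegral_smul_measure,
    lintegral_sub_left_eq_self]
  simp only [Module.finrank_prod, Module.finrank_self, smul_eq_mul, Nat.reduceAdd]
  rw [abs_of_pos (by positivity)]

lemma measurable_gMul_gInv (x : G) : Measurable fun y ↦ gMul x (gInv y) := by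
  unfold gMul gInv
  fun_prop

lemma measurable_deltaG : Measurable deltaG := by
  unfold deltaG
  fun_prop

lemma lintegral_gMul_gInv {x : G} (hx : 0 < x.2.2) {f : G → ℝ≥0∞} (hf : Measurable f) :
    ∫⁻ y, f (gMul x (gInv y)) ∂ρG = ∫⁻ w, ENNReal.ofReal (deltaG w) * f w ∂ρG := by
  rw [lintegral_ρG (F := fun y ↦ f (gMul x (gInv y))) (hf.comp (measurable_gMul_gInv x)),
    lintegral_ρG (F := fun w ↦ ENNReal.ofReal (deltaG w) * f w)
      (measurable_deltaG.ennreal_ofReal.mul hf),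
    ← lintegral_sub_left_eq_self (μ := (volume : Measure ℝ)) _ (log x.2.2)]
  refine lintegral_congr fun u ↦ ?_
  have hpoint (q : ℝ × ℝ) : gMul x (gInv (q.1, q.2, exp (log x.2.2 - u))) =
      (x.1 - exp u * q.1, x.2.1 - exp u * q.2, exp u) := by
    have := exp_pos u
    simp only [gMul, gInv, exp_sub, exp_log hx]
    ext <;> field_simp <;> ring
  have hslice := lintegral_sub_mul_sub_mul (exp_pos u) x.1 x.2.1
    (F := fun q ↦ f (q.1, q.2, exp u)) (by fun_prop)
  simp only [hpoint, deltaG, hslice]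
  rw [lintegral_const_mul _ (by fun_prop)]

lemma map_gMul_gInv_ρG {x : G} (hx : 0 < x.2.2) :
    Measure.map (fun y ↦ gMul x (gInv y)) ρG =
      ρG.withDensity fun w ↦ ENNReal.ofReal (deltaG w) := by
  refine Measure.ext_of_lintegral _ fun f hf ↦ ?_
  rw [lintegral_map hf (measurable_gMul_gInv x), lintegral_gMul_gInv hx hf,
    lintegral_withDensity_eq_lintegral_mul _ measurable_deltaG.ennreal_ofReal hf]
  rfl

/-- The normalizing constant of the heat kernel. -/
def heatConst : ℝ := (8 * π ^ ((3 : ℝ) / 2))⁻¹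

lemma heatConst_pos : 0 < heatConst := by
  unfold heatConst
  positivity

/-- The heat kernel at time `t` and distance `d`, without the factors `δ^{1/2}` and `1 / sinh d` and
the constant. -/
def heatProfile (t d : ℝ) : ℝ := d * (t ^ (-(3 : ℝ) / 2) * exp (-(d ^ 2) / (4 * t)))

/-- The integral kernel of `f ↦ f ∗ p_t` with respect to `ρG`, see `convHeat_eq_integral`; it takes
the value `0` on the diagonal, a null set, because `x / 0 = 0`. -/
def convKernel (t : ℝ) (x w : G) : ℝ :=
  heatConst * ((x.2.2 * w.2.2)⁻¹ / sinh (dG x w) * heatProfile t (dG x w))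

@[fun_prop]
lemma measurable_heatProfile (t : ℝ) : Measurable (heatProfile t) := by
  unfold heatProfile
  fun_prop

lemma measurable_convKernel (t : ℝ) (x : G) : Measurable (convKernel t x) := by
  have : Measurable fun w ↦ dG x w := by fun_prop
  unfold convKernel
  fun_prop

lemma convKernel_comm (t : ℝ) {x w : G} (hx : 0 < x.2.2) (hw : 0 < w.2.2) :
    convKernel t x w = convKernel t w x := by
  unfold convKernel
  rw [dG_comm hx hw, mul_comm x.2.2]

lemma dG_gMul_gInv {x y : G} (hx : 0 < x.2.2) (hy : 0 < y.2.2) :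
    dG x (gMul x (gInv y)) = rG y := by
  have hw : 0 < (gMul x (gInv y)).2.2 := mul_pos hx (one_div_pos.2 hy)
  have harg : coshDist x (gMul x (gInv y)) = coshArg y := by
    rw [coshDist_eq hx hw]
    simp only [gMul, gInv, coshArg]
    field_simp
    ring
  rw [dG_eq_arcosh, harg]
  rfl

lemma rG_eq_zero_iff {y : G} (hy : 0 < y.2.2) : rG y = 0 ↔ y = gE := by
  have h : rG y = dG gE y := by simp [dG, gE, gMul, gInv]
  rw [h, dG_eq_zero_iff (by simp [gE]) hy, eq_comm]

lemma heatK_eq_convKernel {t : ℝ} {x y : G} (hx : 0 < x.2.2) (hy : 0 < y.2.2) (hye : y ≠ gE) :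
    heatK t y = (deltaG (gMul x (gInv y)))⁻¹ * convKernel t x (gMul x (gInv y)) := by
  have hsqrt : √(deltaG y) = y.2.2⁻¹ := by
    rw [deltaG, sqrt_inv, sqrt_sq hy.le]
  rw [heatK, convKernel, dG_gMul_gInv hx hy, if_neg (mt (rG_eq_zero_iff hy).1 hye), hsqrt,
    heatProfile, heatConst, deltaG]
  simp only [gMul, gInv]
  field_simp

lemma convHeat_eq_integral {f : G → ℝ} (hf : AEStronglyMeasurable f ρG) (t : ℝ) {x : G}
    (hx : 0 < x.2.2) : convHeat f t x = ∫ w, f w * convKernel t x w ∂ρG := by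
  have hK := measurable_convKernel t x
  have hδ := measurable_deltaG
  have hsubst : convHeat f t x =
      ∫ y, (fun w ↦ f w * ((deltaG w)⁻¹ * convKernel t x w)) (gMul x (gInv y)) ∂ρG := by
    refine integral_congr_ae ?_
    filter_upwards [ae_height_pos, ae_ne_ρG gE] with y hy hye
    rw [heatK_eq_convKernel hx hy hye]
  rw [hsubst, ← integral_map (f := fun w ↦ f w * ((deltaG w)⁻¹ * convKernel t x w))
    (measurable_gMul_gInv x).aemeasurable, map_gMul_gInv_ρG hx,
    integral_withDensity_eq_integral_toReal_smul hδ.ennreal_ofReal (by simp)]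
  · refine integral_congr_ae ?_
    filter_upwards [ae_height_pos] with w hw
    have hδw : 0 < deltaG w := by unfold deltaG; positivity
    rw [ENNReal.toReal_ofReal hδw.le, smul_eq_mul]
    field_simp
  · rw [map_gMul_gInv_ρG hx]
    have : AEStronglyMeasurable (fun w ↦ f w * ((deltaG w)⁻¹ * convKernel t x w)) ρG :=
      hf.mul (by fun_prop : Measurable fun w ↦ (deltaG w)⁻¹ * convKernel t x w).aestronglyMeasurable
    exact this.mono_ac (withDensity_absolutelyContinuous _ _)

lemma enorm_convKernel {t : ℝ} (ht : 0 ≤ t) {x w : G} (hx : 0 < x.2.2) (hw : 0 < w.2.2) :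
    ‖convKernel t x w‖ₑ =
      ENNReal.ofReal heatConst * radialKernel (fun p ↦ ENNReal.ofReal (heatProfile t p.1)) x w := by
  have hd := dG_nonneg hx hw
  have := sinh_dG_nonneg hx hw
  have hH : 0 ≤ heatProfile t (dG x w) := by unfold heatProfile; positivity
  have hN := heatConst_pos
  rw [convKernel, Real.enorm_of_nonneg (by positivity), radialKernel,
    ENNReal.ofReal_mul hN.le, ENNReal.ofReal_mul (by positivity)]

lemma integral_heatProfile {t : ℝ} (ht : 0 < t) :
    ∫ d in Ioi (0 : ℝ), 2 * d * heatProfile t d = 4 * √π := by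
  have hGamma : Real.Gamma ((2 + 1) / 2) = √π / 2 := by
    rw [show ((2 : ℝ) + 1) / 2 = 1 / 2 + 1 by norm_num, Real.Gamma_add_one (by norm_num),
      Real.Gamma_one_half_eq]
    ring
  have hscale : (1 / (4 * t)) ^ (-((2 : ℝ) + 1) / 2) = 8 * t ^ ((3 : ℝ) / 2) := by
    rw [one_div, inv_rpow (by positivity), ← rpow_neg (by positivity), mul_rpow (by norm_num) ht.le,
      show (4 : ℝ) = 2 ^ (2 : ℝ) by norm_num, ← rpow_mul zero_le_two]
    norm_num
  have hmoment := integral_rpow_mul_exp_neg_mul_rpow (p := 2) (q := 2) (b := 1 / (4 * t))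
    two_pos (by norm_num) (by positivity)
  rw [hscale, hGamma] at hmoment
  have hintegrand : ∀ d ∈ Ioi (0 : ℝ), 2 * d * heatProfile t d =
      2 * t ^ (-(3 : ℝ) / 2) * (d ^ (2 : ℝ) * exp (-(1 / (4 * t)) * d ^ (2 : ℝ))) := by
    intro d _
    rw [heatProfile, rpow_two, show -(d ^ 2) / (4 * t) = -(1 / (4 * t)) * d ^ 2 by ring]
    ring
  rw [setIntegral_congr_fun measurableSet_Ioi hintegrand, integral_const_mul, hmoment, neg_div,
    rpow_neg ht.le]
  have : t ^ ((3 : ℝ) / 2) ≠ 0 := by positivity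
  field_simp
  norm_num

end HeatKernel

section HeatBounds

lemma lintegral_radialKernel_comp_fst {p : G} (hp : 0 < p.2.2) {h : ℝ → ℝ≥0∞} (hh : Measurable h) :
    ∫⁻ x, radialKernel (fun q ↦ h q.1) x p ∂ρG =
      ENNReal.ofReal (2 * π) * ∫⁻ d in Ioi (0 : ℝ), h d * ENNReal.ofReal (2 * d) := by
  rw [lintegral_radialKernel hp (by fun_prop)]
  simp [two_mul]

lemma lintegral_enorm_convKernel {t : ℝ} (ht : 0 < t) {w : G} (hw : 0 < w.2.2) :
    ∫⁻ x, ‖convKernel t x w‖ₑ ∂ρG = 1 := by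
  have hint : IntegrableOn (fun d ↦ 2 * d * heatProfile t d) (Ioi 0) := by
    refine not_imp_comm.1 integral_undef ?_
    rw [integral_heatProfile ht]
    positivity
  have hradial : ∫⁻ d in Ioi (0 : ℝ), ENNReal.ofReal (heatProfile t d) * ENNReal.ofReal (2 * d) =
      ENNReal.ofReal (4 * √π) := by
    rw [← integral_heatProfile ht, ofReal_integral_eq_lintegral_ofReal hint]
    · refine setLIntegral_congr_fun measurableSet_Ioi fun d hd ↦ ?_
      rw [mul_comm, ← ENNReal.ofReal_mul (by have := mem_Ioi.1 hd; positivity)]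
    · filter_upwards [self_mem_ae_restrict measurableSet_Ioi] with d hd
      have hd : 0 < d := hd
      unfold heatProfile
      positivity
  have hkernel : ∫⁻ x, ‖convKernel t x w‖ₑ ∂ρG = ∫⁻ x, ENNReal.ofReal heatConst *
      radialKernel (fun p ↦ ENNReal.ofReal (heatProfile t p.1)) x w ∂ρG := by
    refine lintegral_congr_ae ?_
    filter_upwards [ae_height_pos] with x hx
    exact enorm_convKernel ht.le hx hw
  rw [hkernel, lintegral_const_mul' _ _ ENNReal.ofReal_ne_top, lintegral_radialKernel_comp_fst hw
    (h := fun d ↦ ENNReal.ofReal (heatProfile t d)) (by fun_prop), hradial,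
    ← ENNReal.ofReal_mul (by positivity), ← ENNReal.ofReal_mul heatConst_pos.le, heatConst,
    show (3 : ℝ) / 2 = 1 + 1 / 2 by norm_num, rpow_add pi_pos, rpow_one, ← sqrt_eq_rpow,
    ENNReal.ofReal_eq_one]
  field_simp
  norm_num

lemma rpow_mul_exp_neg_le {s y : ℝ} (hs : 0 < s) (hy : 0 ≤ y) : y ^ s * exp (-y) ≤ s ^ s := by
  have h : y / s ≤ exp (y / s) := (le_add_of_nonneg_right zero_le_one).trans (add_one_le_exp _)
  have h' : (y / s) ^ s ≤ exp y := by
    refine (rpow_le_rpow (by positivity) h hs.le).trans_eq ?_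
    rw [← exp_mul, div_mul_cancel₀ _ hs.ne']
  rw [exp_neg, ← div_eq_mul_inv, div_le_iff₀ (exp_pos y)]
  rwa [div_rpow hy hs.le, div_le_iff₀' (by positivity)] at h'

lemma heatProfile_eq {t d : ℝ} (ht : 0 < t) (hd : 0 < d) :
    heatProfile t d =
      8 * (d ^ 2)⁻¹ * ((d ^ 2 / (4 * t)) ^ ((3 : ℝ) / 2) * exp (-(d ^ 2 / (4 * t)))) := by
  have h4 : (4 : ℝ) ^ ((3 : ℝ) / 2) = 8 := by
    rw [show (4 : ℝ) = 2 ^ (2 : ℝ) by norm_num, ← rpow_mul zero_le_two]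
    norm_num
  have hdpow : (d ^ 2) ^ ((3 : ℝ) / 2) = d ^ 3 := by
    rw [← rpow_natCast, ← rpow_natCast, ← rpow_mul hd.le]
    norm_num
  rw [heatProfile, div_rpow (by positivity) (by positivity), mul_rpow (by norm_num) ht.le, h4,
    hdpow, neg_div, neg_div, rpow_neg ht.le]
  field_simp

lemma heatProfile_le {t d : ℝ} (ht : 0 < t) (hd : 0 < d) : heatProfile t d ≤ 18 * (d ^ 2)⁻¹ := by
  have hconst : ((3 : ℝ) / 2) ^ ((3 : ℝ) / 2) ≤ ((3 : ℝ) / 2) ^ (2 : ℝ) :=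
    rpow_le_rpow_of_exponent_le (by norm_num) (by norm_num)
  have hexp := rpow_mul_exp_neg_le (s := 3 / 2) (by norm_num)
    (show 0 ≤ d ^ 2 / (4 * t) by positivity)
  calc heatProfile t d ≤ 8 * (d ^ 2)⁻¹ * ((3 : ℝ) / 2) ^ (2 : ℝ) := by
        rw [heatProfile_eq ht hd]
        gcongr
        exact hexp.trans hconst
    _ = 18 * (d ^ 2)⁻¹ := by norm_num; ring

lemma heatProfile_mul_le {t d : ℝ} (ht : 0 < t) (hd : 0 < d) :
    heatProfile t d * (d / (2 * t)) ≤ 250 * (d ^ 3)⁻¹ := by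
  have hconst : ((5 : ℝ) / 2) ^ ((5 : ℝ) / 2) ≤ ((5 : ℝ) / 2) ^ (3 : ℝ) :=
    rpow_le_rpow_of_exponent_le (by norm_num) (by norm_num)
  have hexp := rpow_mul_exp_neg_le (s := 5 / 2) (by norm_num)
    (show 0 ≤ d ^ 2 / (4 * t) by positivity)
  calc heatProfile t d * (d / (2 * t))
      = 16 * (d ^ 3)⁻¹ * ((d ^ 2 / (4 * t)) ^ ((5 : ℝ) / 2) * exp (-(d ^ 2 / (4 * t)))) := by
        rw [heatProfile_eq ht hd, show (5 : ℝ) / 2 = 3 / 2 + 1 by norm_num,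
          rpow_add_one (by positivity)]
        field_simp
        norm_num
    _ ≤ 16 * (d ^ 3)⁻¹ * ((5 : ℝ) / 2) ^ (3 : ℝ) := by
        gcongr
        exact hexp.trans hconst
    _ = 250 * (d ^ 3)⁻¹ := by norm_num; ring

/-- The radial profile which, up to a constant, dominates the heat kernels of all times at distances
between `s` and `S`. -/
def shellProfile (s S : ℝ) : ℝ → ℝ≥0∞ :=
  (Icc s S).indicator fun d ↦ ENNReal.ofReal (d ^ 2)⁻¹

lemma measurable_shellProfile (s S : ℝ) : Measurable (shellProfile s S) :=
  Measurable.indicator (by fun_prop) measurableSet_Icc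

lemma enorm_convKernel_le_of_dG_mem_Icc {t s S : ℝ} (ht : 0 < t) (hs : 0 < s) {x w : G}
    (hx : 0 < x.2.2) (hw : 0 < w.2.2) (h : dG x w ∈ Icc s S) :
    ‖convKernel t x w‖ₑ ≤
      ENNReal.ofReal (18 * heatConst) * radialKernel (fun q ↦ shellProfile s S q.1) x w := by
  rw [enorm_convKernel ht.le hx hw, mul_comm 18, ENNReal.ofReal_mul heatConst_pos.le, mul_assoc]
  gcongr
  rw [radialKernel, radialKernel, shellProfile, indicator_of_mem h, mul_left_comm]
  gcongr
  rw [← ENNReal.ofReal_mul (by norm_num)]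
  exact ENNReal.ofReal_le_ofReal (heatProfile_le ht (hs.trans_le h.1))

lemma lintegral_radialKernel_shellProfile_le {s S : ℝ} (hs : 0 < s) {p : G} (hp : 0 < p.2.2) :
    ∫⁻ x, radialKernel (fun q ↦ shellProfile s S q.1) x p ∂ρG ≤
      ENNReal.ofReal (4 * π * (S / s)) := by
  have hbound (d : ℝ) : shellProfile s S d * ENNReal.ofReal (2 * d) ≤
      (Icc s S).indicator (fun _ ↦ ENNReal.ofReal (2 / s)) d := by
    refine (indicator_mul_const _ _ _ _).symm.trans_le (indicator_le_indicator' fun hd ↦ ?_)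
    rw [← ENNReal.ofReal_mul (by positivity)]
    refine ENNReal.ofReal_le_ofReal ?_
    have : 0 < d := hs.trans_le hd.1
    calc (d ^ 2)⁻¹ * (2 * d) = 2 / d := by field_simp
      _ ≤ 2 / s := by gcongr; exact hd.1
  rw [lintegral_radialKernel_comp_fst hp (measurable_shellProfile s S)]
  calc ENNReal.ofReal (2 * π) * ∫⁻ d in Ioi (0 : ℝ), shellProfile s S d * ENNReal.ofReal (2 * d)
      ≤ ENNReal.ofReal (2 * π) * ∫⁻ d, (Icc s S).indicator (fun _ ↦ ENNReal.ofReal (2 / s)) d := by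
        exact mul_le_mul_right ((setLIntegral_le_lintegral _ _).trans (lintegral_mono hbound)) _
    _ = ENNReal.ofReal (2 * π * (2 / s * (S - s))) := by
        rw [lintegral_indicator_const measurableSet_Icc, Real.volume_Icc,
          ← ENNReal.ofReal_mul (by positivity), ← ENNReal.ofReal_mul (by positivity)]
    _ ≤ ENNReal.ofReal (4 * π * (S / s)) := by
        refine ENNReal.ofReal_le_ofReal ?_
        have : 2 * π * (2 / s * (S - s)) = 4 * π * (S / s) - 4 * π := by field_simp; ring
        linarith [pi_pos]

/-- The profile which, up to a constant, dominates the gradients of the heat kernels of all times at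
distances at least `s`. -/
def gradProfile (s : ℝ) : ℝ × ℝ → ℝ≥0∞ :=
  (Prod.fst ⁻¹' Ici s).indicator fun q ↦
    ENNReal.ofReal ((q.1 ^ 2)⁻¹ * (q.1⁻¹ + exp ((q.2 - q.1) / 2)))

lemma measurable_gradProfile (s : ℝ) : Measurable (gradProfile s) :=
  Measurable.indicator (by fun_prop) (measurable_fst measurableSet_Ici)

lemma lintegral_Ioo_gradProfile_le {s d : ℝ} (hs : 0 < s) (hd : s ≤ d) :
    ∫⁻ b in Ioo (-d) d, gradProfile s (d, b) ≤ ENNReal.ofReal (4 * d ^ (-2 : ℝ)) := by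
  have hd₀ : 0 < d := hs.trans_le hd
  have hderiv : ∀ b ∈ uIcc (-d) d, HasDerivAt
      (fun b ↦ (d ^ 2)⁻¹ * (b * d⁻¹ + 2 * exp ((b - d) / 2)))
      ((d ^ 2)⁻¹ * (d⁻¹ + exp ((b - d) / 2))) b := by
    intro b _
    have hexp := (((hasDerivAt_id' b).sub_const d).div_const 2).exp.const_mul 2
    refine ((((hasDerivAt_id' b).mul_const d⁻¹).add hexp).const_mul (d ^ 2)⁻¹).congr_deriv ?_
    ring
  have hcont : Continuous fun b ↦ (d ^ 2)⁻¹ * (d⁻¹ + exp ((b - d) / 2)) := by fun_prop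
  simp only [gradProfile, indicator_of_mem (show (d, _) ∈ Prod.fst ⁻¹' Ici s from hd)]
  rw [← ofReal_integral_eq_lintegral_ofReal
      ((hcont.integrableOn_Icc (a := -d) (b := d)).mono_set Ioo_subset_Icc_self)
      (Eventually.of_forall fun b ↦ by positivity),
    ← integral_Ioc_eq_integral_Ioo, ← intervalIntegral.integral_of_le (by linarith),
    intervalIntegral.integral_eq_sub_of_hasDerivAt hderiv (hcont.intervalIntegrable _ _),
    rpow_neg hd₀.le, rpow_two]
  refine ENNReal.ofReal_le_ofReal ?_
  calc _ = (d ^ 2)⁻¹ * (4 - 2 * exp (-d)) := by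
        rw [sub_self, zero_div, exp_zero, show (-d - d) / 2 = -d by ring]
        field_simp
        ring
    _ ≤ 4 * (d ^ 2)⁻¹ := by
        rw [mul_comm]
        gcongr
        linarith [exp_pos (-d)]

lemma lintegral_radialKernel_gradProfile_le {s : ℝ} (hs : 0 < s) {p : G} (hp : 0 < p.2.2) :
    ∫⁻ x, radialKernel (gradProfile s) x p ∂ρG ≤ ENNReal.ofReal (8 * π / s) := by
  have hinner (d : ℝ) : ∫⁻ b in Ioo (-d) d, gradProfile s (d, b) ≤
      (Ici s).indicator (fun d ↦ ENNReal.ofReal (4 * d ^ (-2 : ℝ))) d := by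
    by_cases hd : d ∈ Ici s
    · simpa only [indicator_of_mem hd] using lintegral_Ioo_gradProfile_le hs hd
    · simp [gradProfile, show ¬s ≤ d from hd]
  have houter : ∫⁻ d in Ioi s, ENNReal.ofReal (4 * d ^ (-2 : ℝ)) = ENNReal.ofReal (4 / s) := by
    rw [← ofReal_integral_eq_lintegral_ofReal, integral_const_mul,
      integral_Ioi_rpow_of_lt (by norm_num) hs]
    · congr 1
      norm_num [rpow_neg_one]
      ring
    · exact (integrableOn_Ioi_rpow_of_lt (by norm_num) hs).const_mul 4
    · filter_upwards [self_mem_ae_restrict measurableSet_Ioi] with d hd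
      have : 0 < d := hs.trans hd
      positivity
  rw [lintegral_radialKernel hp (measurable_gradProfile s)]
  calc ENNReal.ofReal (2 * π) * ∫⁻ d in Ioi (0 : ℝ), ∫⁻ b in Ioo (-d) d, gradProfile s (d, b)
      ≤ ENNReal.ofReal (2 * π) *
          ∫⁻ d, (Ici s).indicator (fun d ↦ ENNReal.ofReal (4 * d ^ (-2 : ℝ))) d := by
        exact mul_le_mul_right ((setLIntegral_le_lintegral _ _).trans (lintegral_mono hinner)) _
    _ = ENNReal.ofReal (8 * π / s) := by
        rw [lintegral_indicator measurableSet_Ici, setLIntegral_congr Ioi_ae_eq_Ici.symm, houter,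
          ← ENNReal.ofReal_mul (by positivity)]
        congr 1
        ring

end HeatBounds

section Gradient

/-- The derivative of `coshDist x` at `w` in the direction of the tangent vector `v`. -/
def coshDistDeriv (x w v : G) : ℝ :=
  v.2.2 / w.2.2 * (w.2.2 / x.2.2 - coshDist x w) +
    (v.1 * (w.1 - x.1) + v.2.1 * (w.2.1 - x.2.1)) / (x.2.2 * w.2.2)

variable {x w v : G} {t l s : ℝ} {p : ℝ → G} {z : ℝ}

lemma hasDerivAt_height (hp : HasDerivAt p v z) : HasDerivAt (fun z ↦ (p z).2.2) v.2.2 z :=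
  ((ContinuousLinearMap.snd ℝ ℝ ℝ).comp (ContinuousLinearMap.snd ℝ ℝ (ℝ × ℝ))).hasFDerivAt
    |>.comp_hasDerivAt z hp

lemma hasDerivAt_coshDist (hx : 0 < x.2.2) (hpz : 0 < (p z).2.2) (hp : HasDerivAt p v z) :
    HasDerivAt (fun z ↦ coshDist x (p z)) (coshDistDeriv x (p z) v) z := by
  have hcoord₁ : HasDerivAt (fun z ↦ (p z).1) v.1 z :=
    (ContinuousLinearMap.fst ℝ ℝ (ℝ × ℝ)).hasFDerivAt.comp_hasDerivAt z hp
  have hcoord₂ : HasDerivAt (fun z ↦ (p z).2.1) v.2.1 z :=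
    ((ContinuousLinearMap.fst ℝ ℝ ℝ).comp (ContinuousLinearMap.snd ℝ ℝ (ℝ × ℝ))).hasFDerivAt
      |>.comp_hasDerivAt z hp
  have hheight := hasDerivAt_height hp
  have hformula : (fun z ↦ coshDist x (p z)) =ᶠ[nhds z] fun z ↦ (x.2.2 ^ 2 + (p z).2.2 ^ 2 +
      ((x.1 - (p z).1) ^ 2 + (x.2.1 - (p z).2.1) ^ 2)) / (2 * x.2.2 * (p z).2.2) := by
    filter_upwards [hheight.continuousAt.eventually (lt_mem_nhds hpz)] with z' hz'
    exact coshDist_eq hx hz'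
  have hquot := (((hheight.pow 2).const_add (x.2.2 ^ 2)).add
    (((hcoord₁.const_sub x.1).pow 2).add ((hcoord₂.const_sub x.2.1).pow 2))).div
      (hheight.const_mul (2 * x.2.2)) (by positivity)
  refine (hquot.congr_of_eventuallyEq hformula).congr_deriv ?_
  rw [coshDistDeriv, coshDist_eq hx hpz]
  simp only [Nat.cast_ofNat, Nat.add_one_sub_one, pow_one, mul_neg, Pi.pow_apply, Pi.add_apply]
  field_simp
  ring

lemma contDiffAt_coshDist (hx : 0 < x.2.2) (hw : 0 < w.2.2) : ContDiffAt ℝ 1 (coshDist x) w := by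
  have h : 1 / x.2.2 * w.2.2 ≠ 0 := by positivity
  unfold coshDist coshArg gMul gInv
  fun_prop (disch := exact h)

lemma one_lt_coshDist (hx : 0 < x.2.2) (hw : 0 < w.2.2) (hd : 0 < dG x w) : 1 < coshDist x w :=
  (one_lt_cosh.2 hd.ne').trans_eq (cosh_dG hx hw)

lemma hasDerivAt_dG (hx : 0 < x.2.2) (hpz : 0 < (p z).2.2) (hd : 0 < dG x (p z))
    (hp : HasDerivAt p v z) :
    HasDerivAt (fun z ↦ dG x (p z)) (coshDistDeriv x (p z) v / sinh (dG x (p z))) z := by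
  have hsqrt : √(coshDist x (p z) ^ 2 - 1) = sinh (dG x (p z)) := by
    rw [← sq_sinh_dG hx hpz, sqrt_sq (sinh_dG_nonneg hx hpz)]
  have h := (hasDerivAt_arcosh (one_lt_coshDist hx hpz hd)).comp z (hasDerivAt_coshDist hx hpz hp)
  rwa [hsqrt, inv_mul_eq_div] at h

lemma contDiffAt_dG (hx : 0 < x.2.2) (hw : 0 < w.2.2) (hd : 0 < dG x w) :
    ContDiffAt ℝ 1 (dG x) w :=
  (contDiffAt_arcosh (one_lt_coshDist hx hw hd)).comp w (contDiffAt_coshDist hx hw)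

lemma hasDerivAt_heatProfile {d : ℝ} (hd : d ≠ 0) :
    HasDerivAt (heatProfile t) (heatProfile t d * (1 / d - d / (2 * t))) d := by
  have hexp := (((hasDerivAt_pow 2 d).neg).div_const (4 * t)).exp
  refine ((hasDerivAt_id' d).mul (hexp.const_mul (t ^ (-(3 : ℝ) / 2)))).congr_deriv ?_
  rw [heatProfile]
  simp only [Pi.neg_apply, one_mul, Nat.cast_ofNat, Nat.add_one_sub_one, pow_one, one_div]
  field_simp
  ring

lemma contDiffAt_convKernel (hx : 0 < x.2.2) (hw : 0 < w.2.2) (hd : 0 < dG x w) :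
    ContDiffAt ℝ 1 (convKernel t x) w := by
  have hdist := contDiffAt_dG hx hw hd
  have hsinh : sinh (dG x w) ≠ 0 := (sinh_pos_iff.2 hd).ne'
  have hheight : x.2.2 * w.2.2 ≠ 0 := by positivity
  unfold convKernel heatProfile
  fun_prop (disch := assumption)

lemma hasDerivAt_convKernel (hx : 0 < x.2.2) (hpz : 0 < (p z).2.2) (hd : 0 < dG x (p z))
    (hp : HasDerivAt p v z) :
    HasDerivAt (fun z ↦ convKernel t x (p z))
      (convKernel t x (p z) * (-(v.2.2 / (p z).2.2) +
        (1 / dG x (p z) - cosh (dG x (p z)) / sinh (dG x (p z)) - dG x (p z) / (2 * t)) *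
          (coshDistDeriv x (p z) v / sinh (dG x (p z))))) z := by
  have hsinh : 0 < sinh (dG x (p z)) := sinh_pos_iff.2 hd
  have hdist := hasDerivAt_dG hx hpz hd hp
  have hweight := ((hasDerivAt_height hp).const_mul x.2.2).inv (by positivity)
  refine (((hweight.div hdist.sinh hsinh.ne').mul
    ((hasDerivAt_heatProfile hd.ne').comp z hdist)).const_mul heatConst).congr_deriv ?_
  rw [convKernel]
  simp only [Pi.inv_apply, mul_inv_rev, Function.comp_apply, Pi.div_apply, one_div]
  field_simp
  ring

lemma sq_coshDistDeriv_add_mul_le (hx : 0 < x.2.2) (hw : 0 < w.2.2)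
    (hv : v.1 ^ 2 + v.2.1 ^ 2 + v.2.2 ^ 2 ≤ (l * w.2.2) ^ 2) (k : ℝ) :
    (coshDistDeriv x w v + v.2.2 / w.2.2 * k) ^ 2 ≤
      l ^ 2 * (coshDist x w ^ 2 - 1 + 2 * k * (w.2.2 / x.2.2 - coshDist x w) + k ^ 2) := by
  set ω := w.2.2 / x.2.2 - coshDist x w + k with hω
  set ξ₁ := (w.1 - x.1) / x.2.2 with hξ₁
  set ξ₂ := (w.2.1 - x.2.1) / x.2.2 with hξ₂
  have hnorm : ω ^ 2 + ξ₁ ^ 2 + ξ₂ ^ 2 =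
      coshDist x w ^ 2 - 1 + 2 * k * (w.2.2 / x.2.2 - coshDist x w) + k ^ 2 := by
    rw [hω, hξ₁, hξ₂, coshDist_eq hx hw]
    field_simp
    ring
  have hinner : coshDistDeriv x w v + v.2.2 / w.2.2 * k =
      (v.2.2 * ω + v.1 * ξ₁ + v.2.1 * ξ₂) / w.2.2 := by
    rw [coshDistDeriv, hω, hξ₁, hξ₂]
    field_simp
    ring
  rw [hinner, ← hnorm, div_pow, div_le_iff₀ (by positivity)]
  calc (v.2.2 * ω + v.1 * ξ₁ + v.2.1 * ξ₂) ^ 2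
      ≤ (v.1 ^ 2 + v.2.1 ^ 2 + v.2.2 ^ 2) * (ω ^ 2 + ξ₁ ^ 2 + ξ₂ ^ 2) := by
        linarith only [sq_nonneg (v.2.2 * ξ₁ - v.1 * ω), sq_nonneg (v.2.2 * ξ₂ - v.2.1 * ω),
          sq_nonneg (v.1 * ξ₂ - v.2.1 * ξ₁)]
    _ ≤ (l * w.2.2) ^ 2 * (ω ^ 2 + ξ₁ ^ 2 + ξ₂ ^ 2) := by gcongr
    _ = l ^ 2 * (ω ^ 2 + ξ₁ ^ 2 + ξ₂ ^ 2) * w.2.2 ^ 2 := by ring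

lemma cosh_div_sinh_mem_Icc {d : ℝ} (hd : 0 < d) : cosh d / sinh d ∈ Icc 1 (1 + 1 / d) := by
  have hsinh := sinh_pos_iff.2 hd
  have hdiff : 0 < cosh d - sinh d ∧ cosh d - sinh d ≤ 1 := by
    rw [cosh_sub_sinh]
    exact ⟨exp_pos _, exp_le_one_iff.2 (by linarith)⟩
  have hinv : 1 ≤ 1 / d * sinh d := by
    rw [one_div, inv_mul_eq_div, one_le_div hd]
    exact self_le_sinh_iff.2 hd.le
  refine ⟨(one_le_div hsinh).2 (by linarith), (div_le_iff₀ hsinh).2 ?_⟩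
  rw [add_mul, one_mul]
  linarith

lemma abs_coshDistDeriv_div_sinh_le (hl : 0 ≤ l) (hx : 0 < x.2.2) (hw : 0 < w.2.2)
    (hd : 0 < dG x w) (hv : v.1 ^ 2 + v.2.1 ^ 2 + v.2.2 ^ 2 ≤ (l * w.2.2) ^ 2) :
    |coshDistDeriv x w v / sinh (dG x w)| ≤ l := by
  have hsinh : 0 < sinh (dG x w) := sinh_pos_iff.2 hd
  have h := sq_coshDistDeriv_add_mul_le hx hw hv 0
  rw [abs_div, abs_of_pos hsinh, div_le_iff₀ hsinh]
  refine abs_le_of_sq_le_sq ?_ (by positivity)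
  rw [mul_pow, sq_sinh_dG hx hw]
  simpa using h

lemma two_mul_exp_div_sinh_le {b d : ℝ} (hd : 0 < d) (hb : b ≤ d) :
    2 * exp b / sinh d ≤ (2 * exp ((b - d) / 2) + 1 / d) ^ 2 := by
  have hcoth := (cosh_div_sinh_mem_Icc hd).2
  have := sinh_pos_iff.2 hd
  have hexp : exp b = exp ((b - d) / 2) ^ 2 * exp d := by
    rw [← exp_nat_mul, ← exp_add]
    congr 1
    push_cast
    ring
  have hle : exp ((b - d) / 2) ≤ 1 := exp_le_one_iff.2 (by linarith)
  calc 2 * exp b / sinh d = 2 * exp ((b - d) / 2) ^ 2 * (1 + cosh d / sinh d) := by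
        have hsum : exp d = cosh d + sinh d := (cosh_add_sinh d).symm
        rw [hexp, hsum]
        field_simp
        ring
    _ ≤ 2 * exp ((b - d) / 2) ^ 2 * (1 + (1 + 1 / d)) := by gcongr
    _ = 4 * exp ((b - d) / 2) ^ 2 + 2 / d * exp ((b - d) / 2) * exp ((b - d) / 2) := by ring
    _ ≤ 4 * exp ((b - d) / 2) ^ 2 + 2 / d * exp ((b - d) / 2) * 1 := by gcongr
    _ ≤ (2 * exp ((b - d) / 2) + 1 / d) ^ 2 := by
        have : 0 ≤ 2 / d * exp ((b - d) / 2) + (1 / d) ^ 2 := by positivity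
        linear_combination this

-- The geodesic from `w` to `x` starts almost vertically upwards unless `x` lies far below `w`.
-- Hence `d(x, ·)` decreases at the rate at which `log a` increases, up to the error on the right,
-- and the derivative of the weight `(a sinh d)⁻¹` almost cancels.
lemma abs_speed_add_le (hl : 0 ≤ l) (hx : 0 < x.2.2) (hw : 0 < w.2.2) (hd : 0 < dG x w)
    (hv : v.1 ^ 2 + v.2.1 ^ 2 + v.2.2 ^ 2 ≤ (l * w.2.2) ^ 2) :
    |v.2.2 / w.2.2 + coshDistDeriv x w v / sinh (dG x w)| ≤
      l * (2 * exp ((log (w.2.2 / x.2.2) - dG x w) / 2) + 1 / dG x w) := by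
  have : 0 < sinh (dG x w) := sinh_pos_iff.2 hd
  have h := sq_coshDistDeriv_add_mul_le hx hw hv (sinh (dG x w))
  have hfactor : coshDist x w ^ 2 - 1 + 2 * sinh (dG x w) * (w.2.2 / x.2.2 - coshDist x w) +
      sinh (dG x w) ^ 2 = 2 * sinh (dG x w) * (w.2.2 / x.2.2 - exp (-dG x w)) := by
    rw [← sq_sinh_dG hx hw, ← cosh_dG hx hw, ← cosh_sub_sinh]
    ring
  have hexp := two_mul_exp_div_sinh_le hd ((le_abs_self _).trans (abs_log_height_le_dG hx hw))
  rw [exp_log (by positivity)] at hexp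
  refine abs_le_of_sq_le_sq ?_ (by positivity)
  calc (v.2.2 / w.2.2 + coshDistDeriv x w v / sinh (dG x w)) ^ 2
      = (coshDistDeriv x w v + v.2.2 / w.2.2 * sinh (dG x w)) ^ 2 / sinh (dG x w) ^ 2 := by
        field_simp
        ring
    _ ≤ l ^ 2 * (2 * sinh (dG x w) * (w.2.2 / x.2.2)) / sinh (dG x w) ^ 2 := by
        gcongr
        refine h.trans ?_
        rw [hfactor]
        gcongr
        linarith [exp_pos (-dG x w)]
    _ = l ^ 2 * (2 * (w.2.2 / x.2.2) / sinh (dG x w)) := by field_simp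
    _ ≤ (l * (2 * exp ((log (w.2.2 / x.2.2) - dG x w) / 2) + 1 / dG x w)) ^ 2 := by
        rw [mul_pow]
        gcongr

lemma abs_logDeriv_convKernel_le (ht : 0 < t) (hl : 0 ≤ l) (hx : 0 < x.2.2) (hw : 0 < w.2.2)
    (hd : 0 < dG x w) (hv : v.1 ^ 2 + v.2.1 ^ 2 + v.2.2 ^ 2 ≤ (l * w.2.2) ^ 2) :
    |-(v.2.2 / w.2.2) + (1 / dG x w - cosh (dG x w) / sinh (dG x w) - dG x w / (2 * t)) *
        (coshDistDeriv x w v / sinh (dG x w))| ≤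
      l * (2 * (1 / dG x w + exp ((log (w.2.2 / x.2.2) - dG x w) / 2)) + dG x w / (2 * t)) := by
  have hD := abs_coshDistDeriv_div_sinh_le hl hx hw hd hv
  have hσ := abs_speed_add_le hl hx hw hd hv
  obtain ⟨hcoth₁, hcoth₂⟩ := cosh_div_sinh_mem_Icc hd
  set d := dG x w
  set D := coshDistDeriv x w v / sinh d
  have hcoth : |D * (1 + 1 / d - cosh d / sinh d)| ≤ l * (1 / d) := by
    rw [abs_mul, abs_of_nonneg (sub_nonneg.2 hcoth₂)]
    gcongr
    linarith
  have hrate : 0 ≤ d / (2 * t) := div_nonneg hd.le (by positivity)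
  have htime : |D * (d / (2 * t))| ≤ l * (d / (2 * t)) := by
    rw [abs_mul, abs_of_nonneg hrate]
    gcongr
  calc |-(v.2.2 / w.2.2) + (1 / d - cosh d / sinh d - d / (2 * t)) * D|
      = |D * (1 + 1 / d - cosh d / sinh d) - D * (d / (2 * t)) - (v.2.2 / w.2.2 + D)| := by
        congr 1
        ring
    _ ≤ |D * (1 + 1 / d - cosh d / sinh d)| + |D * (d / (2 * t))| + |v.2.2 / w.2.2 + D| :=
        (abs_sub _ _).trans (add_le_add_left (abs_sub _ _) _)
    _ ≤ _ := by linear_combination hcoth + htime + hσ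

lemma heatProfile_mul_logDeriv_le {b d : ℝ} (ht : 0 < t) (hd : 0 < d) :
    heatProfile t d * (2 * (1 / d + exp b) + d / (2 * t)) ≤
      286 * ((d ^ 2)⁻¹ * (d⁻¹ + exp b)) := by
  calc heatProfile t d * (2 * (1 / d + exp b) + d / (2 * t))
      = heatProfile t d * (2 * (1 / d + exp b)) + heatProfile t d * (d / (2 * t)) := by ring
    _ ≤ 18 * (d ^ 2)⁻¹ * (2 * (1 / d + exp b)) + 250 * (d ^ 3)⁻¹ :=
        add_le_add (mul_le_mul_of_nonneg_right (heatProfile_le ht hd) (by positivity))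
          (heatProfile_mul_le ht hd)
    _ = 286 * ((d ^ 2)⁻¹ * (d⁻¹ + exp b)) - 250 * ((d ^ 2)⁻¹ * exp b) := by
        field_simp
        ring
    _ ≤ 286 * ((d ^ 2)⁻¹ * (d⁻¹ + exp b)) := sub_le_self _ (by positivity)

lemma enorm_deriv_convKernel_le (ht : 0 < t) (hl : 0 ≤ l) (hs : 0 < s) (hx : 0 < x.2.2)
    (hpz : 0 < (p z).2.2) (hd : s ≤ dG x (p z)) (hp : HasDerivAt p v z)
    (hv : v.1 ^ 2 + v.2.1 ^ 2 + v.2.2 ^ 2 ≤ (l * (p z).2.2) ^ 2) :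
    ‖deriv (fun z ↦ convKernel t x (p z)) z‖ₑ ≤
      ENNReal.ofReal (286 * heatConst * l) * radialKernel (gradProfile s) x (p z) := by
  have hd₀ : 0 < dG x (p z) := hs.trans_le hd
  have hN := heatConst_pos
  have hlog := abs_logDeriv_convKernel_le ht hl hx hpz hd₀ hv
  have hsinh : 0 < sinh (dG x (p z)) := sinh_pos_iff.2 hd₀
  have hweight : 0 ≤ (x.2.2 * (p z).2.2)⁻¹ / sinh (dG x (p z)) := by positivity
  have hprofile : 0 ≤ heatProfile t (dG x (p z)) := by
    unfold heatProfile
    positivity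
  rw [(hasDerivAt_convKernel hx hpz hd₀ hp).deriv, radialKernel, gradProfile,
    indicator_of_mem (show (dG x (p z), _) ∈ Prod.fst ⁻¹' Ici s from hd), ← ofReal_norm,
    ← ENNReal.ofReal_mul hweight, ← ENNReal.ofReal_mul (by positivity), norm_mul, norm_eq_abs,
    norm_eq_abs, convKernel, abs_of_nonneg (by positivity)]
  refine ENNReal.ofReal_le_ofReal ?_
  set d := dG x (p z)
  set b := (log ((p z).2.2 / x.2.2) - d) / 2
  set k := (x.2.2 * (p z).2.2)⁻¹ / sinh d
  calc _ ≤ heatConst * (k * heatProfile t d) * (l * (2 * (1 / d + exp b) + d / (2 * t))) := by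
        gcongr
    _ = heatConst * k * l * (heatProfile t d * (2 * (1 / d + exp b) + d / (2 * t))) := by ring
    _ ≤ heatConst * k * l * (286 * ((d ^ 2)⁻¹ * (d⁻¹ + exp b))) := by
        exact mul_le_mul_of_nonneg_left (heatProfile_mul_logDeriv_le ht hd₀) (by positivity)
    _ = 286 * heatConst * l * (k * ((d ^ 2)⁻¹ * (d⁻¹ + exp b))) := by ring

lemma enorm_convKernel_sub_le {p' : ℝ → G} {u z : ℝ} (huz : u ≤ z) (ht : 0 < t) (hl : 0 ≤ l)
    (hs : 0 < s) (hx : 0 < x.2.2) (hC : ContDiff ℝ 1 p)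
    (hp : ∀ y ∈ Icc u z, HasDerivAt p (p' y) y)
    (hp' : ∀ y ∈ Icc u z,
      (p' y).1 ^ 2 + (p' y).2.1 ^ 2 + (p' y).2.2 ^ 2 ≤ (l * (p y).2.2) ^ 2)
    (hheight : ∀ y ∈ Icc u z, 0 < (p y).2.2) (hd : ∀ y ∈ Icc u z, s ≤ dG x (p y)) :
    ‖convKernel t x (p z) - convKernel t x (p u)‖ₑ ≤
      ENNReal.ofReal (286 * heatConst * l) *
        ∫⁻ y in Icc u z, radialKernel (gradProfile s) x (p y) := by
  have hcurve : ContDiffOn ℝ 1 (fun y ↦ convKernel t x (p y)) (Icc u z) := fun y hy ↦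
    ((contDiffAt_convKernel hx (hheight y hy) (hs.trans_le (hd y hy))).comp y
      hC.contDiffAt).contDiffWithinAt
  calc ‖convKernel t x (p z) - convKernel t x (p u)‖ₑ
      ≤ ∫⁻ y in Icc u z, ‖deriv (fun y ↦ convKernel t x (p y)) y‖ₑ :=
        enorm_sub_le_lintegral_deriv_of_contDiffOn_Icc hcurve huz
    _ ≤ ∫⁻ y in Icc u z, ENNReal.ofReal (286 * heatConst * l) *
          radialKernel (gradProfile s) x (p y) :=
        setLIntegral_mono' measurableSet_Icc fun y hy ↦
          enorm_deriv_convKernel_le ht hl hs hx (hheight y hy) (hd y hy) (hp y hy) (hp' y hy)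
    _ = _ := lintegral_const_mul' _ _ ENNReal.ofReal_ne_top

end Gradient

section Segment

/-- The Euclidean segment from `w` to `q`, parametrized by `[0, 1]` so that the logarithm of the
height is affine in the parameter. -/
def segmentPath (w q : G) (z : ℝ) : G :=
  w + (w.2.2 * (exp (log (q.2.2 / w.2.2) * z) - 1) / (q.2.2 - w.2.2)) • (q - w)

/-- The velocity of `segmentPath w q`. -/
def segmentVelocity (w q : G) (z : ℝ) : G :=
  (w.2.2 * (log (q.2.2 / w.2.2) * exp (log (q.2.2 / w.2.2) * z)) / (q.2.2 - w.2.2)) • (q - w)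

variable {w q : G} {η z : ℝ}

lemma segmentPath_zero (w q : G) : segmentPath w q 0 = w := by
  simp [segmentPath]

lemma segmentPath_one (hw : 0 < w.2.2) (hwq : w.2.2 < q.2.2) : segmentPath w q 1 = q := by
  have hgap : w.2.2 * (q.2.2 / w.2.2 - 1) / (q.2.2 - w.2.2) = 1 := by
    have : q.2.2 - w.2.2 ≠ 0 := (sub_pos.2 hwq).ne'
    field_simp
  rw [segmentPath, mul_one, exp_log (div_pos (hw.trans hwq) hw), hgap, one_smul, add_sub_cancel]

lemma segmentPath_height (hwq : w.2.2 < q.2.2) (z : ℝ) :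
    (segmentPath w q z).2.2 = w.2.2 * exp (log (q.2.2 / w.2.2) * z) := by
  have hgap : q.2.2 - w.2.2 ≠ 0 := (sub_pos.2 hwq).ne'
  simp only [segmentPath, Prod.snd_add, Prod.smul_snd, Prod.snd_sub, smul_eq_mul]
  field_simp
  ring

lemma segmentPath_height_pos (hw : 0 < w.2.2) (hwq : w.2.2 < q.2.2) (z : ℝ) :
    0 < (segmentPath w q z).2.2 := by
  rw [segmentPath_height hwq]
  positivity

lemma contDiff_segmentPath (w q : G) : ContDiff ℝ 1 (segmentPath w q) := by
  unfold segmentPath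
  fun_prop

lemma measurable_segmentPath (q : G) : Measurable fun y : G × ℝ ↦ segmentPath y.1 q y.2 := by
  unfold segmentPath
  fun_prop

lemma hasDerivAt_segmentPath (w q : G) (z : ℝ) :
    HasDerivAt (segmentPath w q) (segmentVelocity w q z) z := by
  have hexp := ((hasDerivAt_id' z).const_mul (log (q.2.2 / w.2.2))).exp
  refine ((((hexp.sub_const 1).const_mul w.2.2).div_const (q.2.2 - w.2.2)).smul_const
    (q - w) |>.const_add w).congr_deriv ?_
  rw [segmentVelocity, mul_one, mul_comm (exp _)]

lemma sq_segmentVelocity_le (hw : 0 < w.2.2) (hwq : w.2.2 < q.2.2) (hη : 0 ≤ η)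
    (h : (q.1 - w.1) ^ 2 + (q.2.1 - w.2.1) ^ 2 ≤ (η * q.2.2) ^ 2) (z : ℝ) :
    (segmentVelocity w q z).1 ^ 2 + (segmentVelocity w q z).2.1 ^ 2 +
        (segmentVelocity w q z).2.2 ^ 2 ≤
      ((log (q.2.2 / w.2.2) + η * (1 + log (q.2.2 / w.2.2))) * (segmentPath w q z).2.2) ^ 2 := by
  have hratio : 1 < q.2.2 / w.2.2 := (one_lt_div hw).2 hwq
  have hlog : w.2.2 * (1 + log (q.2.2 / w.2.2)) ≤ q.2.2 := by
    rw [← le_div_iff₀' hw]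
    linarith [log_le_sub_one_of_pos (zero_lt_one.trans hratio)]
  have hgap : 0 < q.2.2 - w.2.2 := sub_pos.2 hwq
  have hq : 0 < q.2.2 := hw.trans hwq
  rw [segmentPath_height hwq]
  simp only [segmentVelocity, Prod.smul_fst, Prod.smul_snd, Prod.fst_sub, Prod.snd_sub,
    smul_eq_mul]
  set m := log (q.2.2 / w.2.2)
  have hm : 0 < m := log_pos hratio
  calc _ = (w.2.2 * exp (m * z) / (q.2.2 - w.2.2)) ^ 2 *
        (m ^ 2 * ((q.1 - w.1) ^ 2 + (q.2.1 - w.2.1) ^ 2) + (m * (q.2.2 - w.2.2)) ^ 2) := by ring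
    _ ≤ (w.2.2 * exp (m * z) / (q.2.2 - w.2.2)) ^ 2 *
        ((m + η * (1 + m)) * (q.2.2 - w.2.2)) ^ 2 := by
        gcongr
        calc m ^ 2 * ((q.1 - w.1) ^ 2 + (q.2.1 - w.2.1) ^ 2) + (m * (q.2.2 - w.2.2)) ^ 2
            ≤ m ^ 2 * (η * q.2.2) ^ 2 + (m * (q.2.2 - w.2.2)) ^ 2 := by gcongr
          _ = (η * (m * q.2.2)) ^ 2 + (m * (q.2.2 - w.2.2)) ^ 2 := by ring
          _ ≤ (η * ((1 + m) * (q.2.2 - w.2.2))) ^ 2 + (m * (q.2.2 - w.2.2)) ^ 2 := by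
            gcongr ?_ ^ 2 + _
            exact mul_le_mul_of_nonneg_left (by linarith) hη
          _ ≤ (η * ((1 + m) * (q.2.2 - w.2.2)) + m * (q.2.2 - w.2.2)) ^ 2 := by
            rw [add_sq]
            have : 0 ≤ 2 * (η * ((1 + m) * (q.2.2 - w.2.2))) * (m * (q.2.2 - w.2.2)) := by
              positivity
            linarith
          _ = ((m + η * (1 + m)) * (q.2.2 - w.2.2)) ^ 2 := by ring
    _ = ((m + η * (1 + m)) * (w.2.2 * exp (m * z))) ^ 2 := by field_simp

lemma segmentPath_horizontal_dist_le (hw : 0 < w.2.2) (hwq : w.2.2 < q.2.2)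
    (hz : z ∈ Icc (0 : ℝ) 1) :
    ((segmentPath w q z).1 - q.1) ^ 2 + ((segmentPath w q z).2.1 - q.2.1) ^ 2 ≤
      (q.1 - w.1) ^ 2 + (q.2.1 - w.2.1) ^ 2 := by
  have hratio : 1 < q.2.2 / w.2.2 := (one_lt_div hw).2 hwq
  have hexp : exp (log (q.2.2 / w.2.2) * z) ∈ Icc 1 (q.2.2 / w.2.2) := by
    refine ⟨one_le_exp (mul_nonneg (log_pos hratio).le hz.1), ?_⟩
    rw [← le_log_iff_exp_le (zero_lt_one.trans hratio)]
    exact mul_le_of_le_one_right (log_pos hratio).le hz.2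
  set φ := w.2.2 * (exp (log (q.2.2 / w.2.2) * z) - 1) / (q.2.2 - w.2.2) with hφ
  have hφ₀ : 0 ≤ φ :=
    div_nonneg (mul_nonneg hw.le (sub_nonneg.2 hexp.1)) (sub_pos.2 hwq).le
  have hφ₁ : φ ≤ 1 := by
    rw [div_le_one (sub_pos.2 hwq)]
    linarith [(le_div_iff₀' hw).1 hexp.2]
  calc ((segmentPath w q z).1 - q.1) ^ 2 + ((segmentPath w q z).2.1 - q.2.1) ^ 2
      = (1 - φ) ^ 2 * ((q.1 - w.1) ^ 2 + (q.2.1 - w.2.1) ^ 2) := by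
        simp only [segmentPath, Prod.fst_add, Prod.snd_add, Prod.smul_fst, Prod.smul_snd,
          Prod.fst_sub, Prod.snd_sub, smul_eq_mul, ← hφ]
        ring
    _ ≤ (q.1 - w.1) ^ 2 + (q.2.1 - w.2.1) ^ 2 :=
        mul_le_of_le_one_left (by positivity)
          (pow_le_one₀ (sub_nonneg.2 hφ₁) (sub_le_self 1 hφ₀))

lemma dG_segmentPath_le (hw : 0 < w.2.2) (hwq : w.2.2 < q.2.2) (hη : 0 ≤ η)
    (h : (q.1 - w.1) ^ 2 + (q.2.1 - w.2.1) ^ 2 ≤ (η * q.2.2) ^ 2) (hz : z ∈ Icc (0 : ℝ) 1) :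
    dG (segmentPath w q z) q ≤ log (q.2.2 / w.2.2) + η := by
  have hq : 0 < q.2.2 := hw.trans hwq
  have hp := segmentPath_height_pos hw hwq z
  have hm : 0 < log (q.2.2 / w.2.2) := log_pos ((one_lt_div hw).2 hwq)
  obtain ⟨v, hv₁, hv₂, hv₃⟩ : ∃ v : G, (segmentPath w q z).1 = v.1 ∧
      (segmentPath w q z).2.1 = v.2.1 ∧ v.2.2 = q.2.2 := ⟨(_, _, q.2.2), rfl, rfl, rfl⟩
  have hv : 0 < v.2.2 := hv₃ ▸ hq
  have hup : dG (segmentPath w q z) v ≤ log (q.2.2 / w.2.2) := by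
    rw [dG_of_base_eq hp hv hv₁ hv₂, hv₃, segmentPath_height hwq, ← div_div,
      log_div (by positivity) (exp_pos _).ne', log_exp, abs_le]
    constructor <;> nlinarith only [hm, hz.1, hz.2]
  have hacross : dG v q ≤ η := by
    refine dG_le_of_height_eq hv hv₃ hη ?_
    rw [← hv₁, ← hv₂]
    exact (segmentPath_horizontal_dist_le hw hwq hz).trans h
  exact (dG_triangle hp hv hq).trans (add_le_add hup hacross)

end Segment

section CalderonZygmund

/-- The parallelepiped with centre `c`, horizontal sides `L` and heights within a factor `exp r` of
the height of `c`. -/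
def czBox (c : G) (L r : ℝ) : Set G :=
  Icc (c.1 - L / 2) (c.1 + L / 2) ×ˢ (Icc (c.2.1 - L / 2) (c.2.1 + L / 2) ×ˢ
    Icc (c.2.2 * exp (-r)) (c.2.2 * exp r))

/-- Admissible parameters of a Calderón–Zygmund set, with the two regimes `r < 1` and `1 ≤ r` of
`IsCZ` merged by means of `min r 1`. This is slightly weaker than `IsCZ`. -/
structure IsCZParam (c : G) (L r : ℝ) : Prop where
  height_pos : 0 < c.2.2
  radius_pos : 0 < r
  le_side : min r 1 * (c.2.2 * exp (2 * r)) ≤ L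
  side_le : L ≤ exp 8 * min r 1 * (c.2.2 * exp (8 * r))

variable {c w x : G} {L r : ℝ} {R : Set G}

lemma exists_isCZParam (hR : IsCZ R) : ∃ c L r, IsCZParam c L r ∧ R = czBox c L r := by
  obtain ⟨c, L, r, hc, -, hr, rfl, hsmall, hlarge⟩ := hR
  refine ⟨c, L, r, ?_, rfl⟩
  rcases lt_or_ge r 1 with hr₁ | hr₁
  · obtain ⟨hL, hL'⟩ := hsmall hr₁
    refine ⟨hc, hr, ?_, ?_⟩
    · calc min r 1 * (c.2.2 * exp (2 * r)) ≤ r * (c.2.2 * exp 2) := by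
            gcongr
            · exact min_le_left r 1
            · linarith
        _ = exp 2 * c.2.2 * r := by ring
        _ ≤ L := hL
    · calc L ≤ exp 8 * r * (c.2.2 * 1) := by linarith
        _ ≤ exp 8 * min r 1 * (c.2.2 * exp (8 * r)) := by
            rw [min_eq_left hr₁.le]
            gcongr
            exact one_le_exp (by positivity)
  · obtain ⟨hL, hL'⟩ := hlarge hr₁
    refine ⟨hc, hr, ?_, ?_⟩
    · rwa [min_eq_right hr₁, one_mul]
    · rw [min_eq_right hr₁, mul_one]
      exact hL'.le.trans (le_mul_of_one_le_left (by positivity) (one_le_exp (by norm_num)))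

lemma mem_Icc_mul_exp_iff {a b s : ℝ} (ha : 0 < a) (hb : 0 < b) :
    b ∈ Icc (a * exp (-s)) (a * exp s) ↔ |log (b / a)| ≤ s := by
  rw [abs_le, le_log_iff_exp_le (div_pos hb ha), log_le_iff_le_exp (div_pos hb ha),
    le_div_iff₀' ha, div_le_iff₀' ha, mem_Icc]

lemma height_pos_of_mem_czBox (hc : 0 < c.2.2) (hw : w ∈ czBox c L r) : 0 < w.2.2 :=
  (mul_pos hc (exp_pos _)).trans_le hw.2.2.1

lemma abs_log_height_le_of_mem_czBox (hc : 0 < c.2.2) (hw : w ∈ czBox c L r) :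
    |log (w.2.2 / c.2.2)| ≤ r :=
  (mem_Icc_mul_exp_iff hc (height_pos_of_mem_czBox hc hw)).1 hw.2.2

lemma measurableSet_czBox (c : G) (L r : ℝ) : MeasurableSet (czBox c L r) :=
  measurableSet_Icc.prod (measurableSet_Icc.prod measurableSet_Icc)

lemma ρG_czBox (hc : 0 < c.2.2) (hr : 0 ≤ r) (hL : 0 ≤ L) :
    ρG (czBox c L r) = ENNReal.ofReal (2 * r * L ^ 2) := by
  have hpreimage : exp ⁻¹' Icc (c.2.2 * exp (-r)) (c.2.2 * exp r) =
      Icc (log c.2.2 - r) (log c.2.2 + r) := by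
    ext u
    rw [mem_preimage, mem_Icc_mul_exp_iff hc (exp_pos u), log_div (exp_pos u).ne' hc.ne', log_exp,
      abs_sub_comm, ← Real.dist_eq, dist_comm, ← Real.closedBall_eq_Icc, Metric.mem_closedBall]
  rw [czBox, ρG_prod measurableSet_Icc measurableSet_Icc measurableSet_Icc, hpreimage]
  simp only [volume_Icc]
  rw [← ENNReal.ofReal_mul (by linarith), ← ENNReal.ofReal_mul (by linarith)]
  congr 1
  ring

lemma ρG_czBox_two_mul (hc : 0 < c.2.2) (hr : 0 ≤ r) (hL : 0 ≤ L) :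
    ρG (czBox c (2 * L) (2 * r)) = 8 * ρG (czBox c L r) := by
  rw [ρG_czBox hc (by positivity) (by positivity), ρG_czBox hc hr hL,
    ← ENNReal.ofReal_ofNat, ← ENNReal.ofReal_mul (by norm_num)]
  congr 1
  ring

lemma cosh_div_four_le (hr : 0 < r) : cosh (r / 4) ≤ 1 + min r 1 ^ 2 * exp r / 8 := by
  rcases le_total r 1 with hr₁ | hr₁
  · have hsmall : |(r / 4) ^ 2 / 2| ≤ 1 := by
      rw [abs_of_nonneg (by positivity)]
      nlinarith only [hr, hr₁]
    have hexp := (le_abs_self _).trans (abs_exp_sub_one_le hsmall)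
    rw [abs_of_nonneg (by positivity)] at hexp
    have hone := mul_le_mul_of_nonneg_left (one_le_exp hr.le) (sq_nonneg r)
    rw [min_eq_left hr₁]
    linarith [cosh_le_exp_half_sq (r / 4), sq_nonneg r]
  · have hpow : exp r = exp (r / 4) ^ 4 := by
      rw [← exp_nat_mul]
      congr 1
      push_cast
      ring
    have hneg : exp (-(r / 4)) ≤ exp (r / 4) := exp_le_exp.2 (by linarith)
    rw [min_eq_right hr₁, hpow, cosh_eq]
    nlinarith only [hneg, sq_nonneg (exp (r / 4) ^ 2 - 8 / 5), sq_nonneg (exp (r / 4) - 5 / 4)]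

lemma horizontal_dist_ge_of_notMem (hw : w ∈ czBox c L r)
    (hx : x ∉ czBox c (2 * L) (2 * r))
    (hheight : x.2.2 ∈ Icc (c.2.2 * exp (-(2 * r))) (c.2.2 * exp (2 * r))) :
    (L / 2) ^ 2 ≤ (x.1 - w.1) ^ 2 + (x.2.1 - w.2.1) ^ 2 := by
  obtain ⟨⟨hw₁, hw₁'⟩, ⟨hw₂, hw₂'⟩, -⟩ := hw
  have hL : 0 ≤ L / 2 := by linarith
  by_contra! hlt
  have h₁ := abs_le.1 (abs_le_of_sq_le_sq (by linarith [sq_nonneg (x.2.1 - w.2.1)] :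
    (x.1 - w.1) ^ 2 ≤ (L / 2) ^ 2) hL)
  have h₂ := abs_le.1 (abs_le_of_sq_le_sq (by linarith [sq_nonneg (x.1 - w.1)] :
    (x.2.1 - w.2.1) ^ 2 ≤ (L / 2) ^ 2) hL)
  exact hx ⟨⟨by linarith, by linarith⟩, ⟨by linarith, by linarith⟩, hheight⟩

lemma IsCZParam.div_four_le_dG_of_height_mem (h : IsCZParam c L r) (hw : w ∈ czBox c L r)
    (hx' : x ∉ czBox c (2 * L) (2 * r))
    (hheight : x.2.2 ∈ Icc (c.2.2 * exp (-(2 * r))) (c.2.2 * exp (2 * r))) : r / 4 ≤ dG x w := by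
  obtain ⟨hc, hr, hL, -⟩ := h
  have hw₀ := height_pos_of_mem_czBox hc hw
  have hx : 0 < x.2.2 := (mul_pos hc (exp_pos _)).trans_le hheight.1
  have hdist := horizontal_dist_ge_of_notMem hw hx' hheight
  have hden : 2 * x.2.2 * w.2.2 ≤ 2 * c.2.2 ^ 2 * exp (3 * r) :=
    calc 2 * x.2.2 * w.2.2 ≤ 2 * (c.2.2 * exp (2 * r)) * (c.2.2 * exp r) := by
          gcongr
          exacts [hheight.2, hw.2.2.2]
      _ = 2 * c.2.2 ^ 2 * exp (3 * r) := by
          rw [show 3 * r = 2 * r + r by ring, exp_add]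
          ring
  have hexp : exp (2 * r) ^ 2 = exp r * exp (3 * r) := by
    rw [← exp_nat_mul, ← exp_add]
    congr 1
    push_cast
    ring
  rw [le_dG_iff hx hw₀ (by positivity)]
  calc cosh (r / 4) ≤ 1 + min r 1 ^ 2 * exp r / 8 := cosh_div_four_le hr
    _ = 1 + (min r 1 * (c.2.2 * exp (2 * r)) / 2) ^ 2 / (2 * c.2.2 ^ 2 * exp (3 * r)) := by
        field_simp
        rw [hexp]
        ring_nf
    _ ≤ 1 + ((x.1 - w.1) ^ 2 + (x.2.1 - w.2.1) ^ 2) / (2 * x.2.2 * w.2.2) := by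
        gcongr
        refine le_trans ?_ hdist
        gcongr
    _ ≤ coshDist x w := by
        rw [coshDist_eq hx hw₀, ← sub_nonneg]
        have : 0 ≤ (x.2.2 - w.2.2) ^ 2 / (2 * x.2.2 * w.2.2) := by positivity
        refine this.trans_eq ?_
        field_simp
        ring

lemma IsCZParam.div_four_le_dG (h : IsCZParam c L r) (hx : 0 < x.2.2) (hw : w ∈ czBox c L r)
    (hx' : x ∉ czBox c (2 * L) (2 * r)) : r / 4 ≤ dG x w := by
  by_cases hheight : x.2.2 ∈ Icc (c.2.2 * exp (-(2 * r))) (c.2.2 * exp (2 * r))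
  · exact h.div_four_le_dG_of_height_mem hw hx' hheight
  · obtain ⟨hc, hr, -, -⟩ := h
    have hw₀ := height_pos_of_mem_czBox hc hw
    rw [mem_Icc_mul_exp_iff hc hx, not_le] at hheight
    have hw' := abs_log_height_le_of_mem_czBox hc hw
    have hsplit : log (x.2.2 / c.2.2) = log (w.2.2 / c.2.2) - log (w.2.2 / x.2.2) := by
      rw [log_div hx.ne' hc.ne', log_div hw₀.ne' hc.ne', log_div hw₀.ne' hx.ne']
      ring
    have := hsplit ▸ abs_sub (log (w.2.2 / c.2.2)) (log (w.2.2 / x.2.2))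
    linarith [abs_log_height_le_dG hx hw₀]

/-- The common reference point of the atoms in `czBox c L r`. It lies so high above the box that the
horizontal extent of the box, measured at its height, is at most of order `r`. -/
def czApex (c : G) (r : ℝ) : G := (c.1, c.2.1, c.2.2 * exp (8 * r))

/-- The speed of the segments from the points of `czBox c L r` to `czApex c r`, in units of `r`. -/
def czReach : ℝ := 10 * exp 8 + 10

lemma czReach_pos : 0 < czReach := by
  unfold czReach
  positivity

lemma czApex_height_pos (hc : 0 < c.2.2) : 0 < (czApex c r).2.2 := mul_pos hc (exp_pos _)

lemma height_lt_czApex_height (hc : 0 < c.2.2) (hr : 0 < r) (hw : w ∈ czBox c L r) :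
    w.2.2 < (czApex c r).2.2 :=
  hw.2.2.2.trans_lt (mul_lt_mul_of_pos_left (exp_lt_exp.2 (by linarith)) hc)

lemma log_czApex_height_div_le (hc : 0 < c.2.2) (hw : w ∈ czBox c L r) :
    log ((czApex c r).2.2 / w.2.2) ≤ 9 * r := by
  have hw₀ := height_pos_of_mem_czBox hc hw
  have hlog := (abs_le.1 (abs_log_height_le_of_mem_czBox hc hw)).1
  rw [log_div hw₀.ne' hc.ne'] at hlog
  rw [czApex, log_div (by positivity) hw₀.ne', log_mul hc.ne' (exp_pos _).ne', log_exp]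
  linarith

lemma IsCZParam.horizontal_dist_czApex_le (h : IsCZParam c L r) (hw : w ∈ czBox c L r) :
    ((czApex c r).1 - w.1) ^ 2 + ((czApex c r).2.1 - w.2.1) ^ 2 ≤
      (exp 8 * min r 1 * (czApex c r).2.2) ^ 2 := by
  obtain ⟨⟨hw₁, hw₁'⟩, ⟨hw₂, hw₂'⟩, -⟩ := hw
  have hL : 0 ≤ L := by linarith
  have h₁ : (c.1 - w.1) ^ 2 ≤ (L / 2) ^ 2 :=
    sq_le_sq.2 (abs_le_abs (by linarith) (by linarith))
  have h₂ : (c.2.1 - w.2.1) ^ 2 ≤ (L / 2) ^ 2 :=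
    sq_le_sq.2 (abs_le_abs (by linarith) (by linarith))
  calc (c.1 - w.1) ^ 2 + (c.2.1 - w.2.1) ^ 2 ≤ L ^ 2 := by linarith [sq_nonneg L]
    _ ≤ (exp 8 * min r 1 * (c.2.2 * exp (8 * r))) ^ 2 := pow_le_pow_left₀ hL h.side_le 2

lemma IsCZParam.sq_segmentVelocity_czApex_le (h : IsCZParam c L r) (hw : w ∈ czBox c L r)
    (z : ℝ) :
    (segmentVelocity w (czApex c r) z).1 ^ 2 + (segmentVelocity w (czApex c r) z).2.1 ^ 2 +
        (segmentVelocity w (czApex c r) z).2.2 ^ 2 ≤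
      (czReach * r * (segmentPath w (czApex c r) z).2.2) ^ 2 := by
  have hr := h.radius_pos
  have hw₀ := height_pos_of_mem_czBox h.height_pos hw
  have hwq := height_lt_czApex_height h.height_pos hr hw
  have hm := log_czApex_height_div_le h.height_pos hw
  have hm₀ : 0 ≤ log ((czApex c r).2.2 / w.2.2) := log_nonneg ((one_le_div hw₀).2 hwq.le)
  have hheight := segmentPath_height_pos hw₀ hwq z
  have hη : 0 ≤ exp 8 * min r 1 := by positivity
  refine (sq_segmentVelocity_le hw₀ hwq hη (h.horizontal_dist_czApex_le hw) z).trans ?_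
  gcongr
  calc log ((czApex c r).2.2 / w.2.2) +
        exp 8 * min r 1 * (1 + log ((czApex c r).2.2 / w.2.2))
      ≤ 9 * r + (exp 8 * min r 1 + exp 8 * min r 1 * (9 * r)) := by
        rw [mul_one_add]
        gcongr
    _ ≤ 9 * r + (exp 8 * r + exp 8 * 1 * (9 * r)) := by
        gcongr
        exacts [min_le_left r 1, min_le_right r 1]
    _ ≤ czReach * r := by
        unfold czReach
        linarith

lemma IsCZParam.dG_segmentPath_czApex_le (h : IsCZParam c L r) (hw : w ∈ czBox c L r) {z : ℝ}
    (hz : z ∈ Icc (0 : ℝ) 1) :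
    dG (segmentPath w (czApex c r) z) (czApex c r) ≤ (czReach - 1) * r := by
  have hr := h.radius_pos
  calc dG (segmentPath w (czApex c r) z) (czApex c r)
      ≤ log ((czApex c r).2.2 / w.2.2) + exp 8 * min r 1 :=
        dG_segmentPath_le (height_pos_of_mem_czBox h.height_pos hw)
          (height_lt_czApex_height h.height_pos hr hw) (by positivity)
          (h.horizontal_dist_czApex_le hw) hz
    _ ≤ 9 * r + exp 8 * r := by
        gcongr
        exacts [log_czApex_height_div_le h.height_pos hw, min_le_left r 1]
    _ ≤ (czReach - 1) * r := by
        unfold czReach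
        linarith [mul_pos (exp_pos 8) hr]

lemma IsCZParam.radius_le_dG_segmentPath (h : IsCZParam c L r) (hw : w ∈ czBox c L r)
    (hx : 0 < x.2.2) (hfar : czReach * r ≤ dG x (czApex c r)) {z : ℝ} (hz : z ∈ Icc (0 : ℝ) 1) :
    r ≤ dG x (segmentPath w (czApex c r) z) := by
  have hp := segmentPath_height_pos (height_pos_of_mem_czBox h.height_pos hw)
    (height_lt_czApex_height h.height_pos h.radius_pos hw) z
  linarith [dG_triangle hx hp (czApex_height_pos (r := r) h.height_pos),
    h.dG_segmentPath_czApex_le hw hz]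

lemma IsCZParam.dG_le_of_dG_czApex_le (h : IsCZParam c L r) (hw : w ∈ czBox c L r)
    (hx : 0 < x.2.2) (hnear : dG x (czApex c r) ≤ czReach * r) : dG x w ≤ 2 * czReach * r := by
  have hw₀ := height_pos_of_mem_czBox h.height_pos hw
  have hq := czApex_height_pos (r := r) h.height_pos
  have hreach := h.dG_segmentPath_czApex_le hw (left_mem_Icc.2 zero_le_one)
  rw [segmentPath_zero] at hreach
  linarith [dG_triangle hx hq hw₀, dG_comm hq hw₀, h.radius_pos]

end CalderonZygmund

section Atoms

/-- Atoms supported in a prescribed set `R`; `IsAtomG A` asks for a Calderón–Zygmund set `R` with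
`IsAtomOn A R`. -/
structure IsAtomOn (A : G → ℝ) (R : Set G) : Prop where
  integrable : Integrable A ρG
  eq_zero_of_notMem : ∀ x ∉ R, A x = 0
  eLpNorm_le : eLpNorm A ⊤ ρG ≤ (ρG R)⁻¹
  integral_eq_zero : ∫ x, A x ∂ρG = 0

variable {A : G → ℝ} {R S : Set G} {B : ℝ≥0∞} {x : G} {c : G} {L r : ℝ}

lemma IsAtomOn.lintegral_enorm_mul_le (hA : IsAtomOn A R) (hR : MeasurableSet R) {F : G → ℝ}
    (hF : Measurable F) :
    ∫⁻ w, ‖A w * F w‖ₑ ∂ρG ≤ (ρG R)⁻¹ * ∫⁻ w in R, ‖F w‖ₑ ∂ρG := by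
  have hbound : ∀ᵐ w ∂ρG, ‖A w‖ₑ ≤ (ρG R)⁻¹ := by
    filter_upwards [ae_le_eLpNormEssSup (f := A) (μ := ρG)] with w hw
    exact hw.trans (eLpNorm_exponent_top.ge.trans hA.eLpNorm_le)
  rw [← lintegral_const_mul _ hF.enorm, ← lintegral_indicator hR]
  refine lintegral_mono_ae ?_
  filter_upwards [hbound] with w hw
  by_cases hwR : w ∈ R
  · rw [indicator_of_mem hwR, enorm_mul]
    gcongr
  · rw [hA.eq_zero_of_notMem w hwR, zero_mul, enorm_zero]
    exact zero_le

lemma IsAtomOn.maxHeat_le (hA : IsAtomOn A R) (hR : MeasurableSet R) (hx : 0 < x.2.2)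
    (h : ∀ t > 0, ∃ k : ℝ, ∫⁻ w in R, ‖convKernel t x w - k‖ₑ ∂ρG ≤ B) :
    maxHeat A x ≤ (ρG R)⁻¹ * B := by
  refine iSup₂_le fun t ht ↦ ?_
  obtain ⟨k, hk⟩ := h t ht
  rw [convHeat_eq_integral hA.integrable.1 t hx]
  by_cases hint : Integrable (fun w ↦ A w * convKernel t x w) ρG
  · have hcancel : ∫ w, A w * convKernel t x w ∂ρG = ∫ w, A w * (convKernel t x w - k) ∂ρG := by
      simp_rw [mul_sub]
      rw [integral_sub hint (hA.integrable.mul_const k), integral_mul_const, hA.integral_eq_zero,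
        zero_mul, sub_zero]
    rw [hcancel, ← norm_eq_abs, ofReal_norm]
    calc ‖∫ w, A w * (convKernel t x w - k) ∂ρG‖ₑ
        ≤ ∫⁻ w, ‖A w * (convKernel t x w - k)‖ₑ ∂ρG := enorm_integral_le_lintegral_enorm _
      _ ≤ (ρG R)⁻¹ * ∫⁻ w in R, ‖convKernel t x w - k‖ₑ ∂ρG :=
          hA.lintegral_enorm_mul_le hR ((measurable_convKernel t x).sub_const k)
      _ ≤ (ρG R)⁻¹ * B := mul_le_mul_right hk _
  · rw [integral_undef hint, abs_zero, ENNReal.ofReal_zero]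
    exact zero_le

lemma IsAtomOn.setLIntegral_maxHeat_le (hA : IsAtomOn A R) (hR : MeasurableSet R)
    (hS : MeasurableSet S) {Φ : G → G → ℝ≥0∞} (hΦ : Measurable (Function.uncurry Φ))
    (hdom : ∀ x ∈ S, 0 < x.2.2 → ∀ t > 0, ∃ k : ℝ, ∀ w ∈ R, ‖convKernel t x w - k‖ₑ ≤ Φ x w)
    (hint : ∀ w ∈ R, ∫⁻ x, Φ x w ∂ρG ≤ B) : ∫⁻ x in S, maxHeat A x ∂ρG ≤ B := by
  calc ∫⁻ x in S, maxHeat A x ∂ρG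
      ≤ ∫⁻ x in S, (ρG R)⁻¹ * ∫⁻ w in R, Φ x w ∂ρG ∂ρG := by
        refine setLIntegral_mono_ae' hS ?_
        filter_upwards [ae_height_pos] with x hx hxS
        refine hA.maxHeat_le hR hx fun t ht ↦ ?_
        obtain ⟨k, hk⟩ := hdom x hxS hx t ht
        exact ⟨k, setLIntegral_mono' hR hk⟩
    _ ≤ ∫⁻ x, (ρG R)⁻¹ * ∫⁻ w in R, Φ x w ∂ρG ∂ρG := setLIntegral_le_lintegral _ _
    _ = (ρG R)⁻¹ * ∫⁻ w in R, ∫⁻ x, Φ x w ∂ρG ∂ρG := by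
        rw [lintegral_const_mul _ hΦ.lintegral_prod_right, lintegral_lintegral_swap hΦ.aemeasurable]
    _ ≤ (ρG R)⁻¹ * (B * ρG R) := by
        rw [← setLIntegral_const]
        exact mul_le_mul_right (setLIntegral_mono' hR hint) _
    _ ≤ B := by
        rw [mul_left_comm]
        exact mul_le_of_le_one_right zero_le (ENNReal.inv_mul_le_one _)

lemma IsAtomOn.setLIntegral_maxHeat_double_le (hA : IsAtomOn A (czBox c L r))
    (h : IsCZParam c L r) : ∫⁻ x in czBox c (2 * L) (2 * r), maxHeat A x ∂ρG ≤ 8 := by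
  have hR := measurableSet_czBox c L r
  have hL : 0 ≤ L :=
    (mul_pos (lt_min h.radius_pos one_pos) (mul_pos h.height_pos (exp_pos _))).le.trans h.le_side
  have hmass {x : G} (hx : 0 < x.2.2) (t : ℝ) (ht : t > 0) :
      ∫⁻ w in czBox c L r, ‖convKernel t x w - 0‖ₑ ∂ρG ≤ 1 := by
    rw [← lintegral_enorm_convKernel ht hx]
    refine (setLIntegral_le_lintegral _ _).trans (lintegral_mono_ae ?_)
    filter_upwards [ae_height_pos] with w hw
    rw [sub_zero, convKernel_comm t hx hw]
  calc ∫⁻ x in czBox c (2 * L) (2 * r), maxHeat A x ∂ρG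
      ≤ ∫⁻ x in czBox c (2 * L) (2 * r), (ρG (czBox c L r))⁻¹ * 1 ∂ρG := by
        refine setLIntegral_mono_ae' (measurableSet_czBox _ _ _) ?_
        filter_upwards [ae_height_pos] with x hx _
        exact hA.maxHeat_le hR hx fun t ht ↦ ⟨0, hmass hx t ht⟩
    _ = 8 * ((ρG (czBox c L r))⁻¹ * ρG (czBox c L r)) := by
        rw [setLIntegral_const, ρG_czBox_two_mul h.height_pos h.radius_pos.le hL]
        ring
    _ ≤ 8 := mul_le_of_le_one_right zero_le (ENNReal.inv_mul_le_one _)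

lemma measurableSet_dG_le (q : G) (v : ℝ) : MeasurableSet {x | dG x q ≤ v} :=
  measurableSet_le (by fun_prop) measurable_const

lemma IsAtomOn.setLIntegral_maxHeat_near_le (hA : IsAtomOn A (czBox c L r))
    (h : IsCZParam c L r) :
    ∫⁻ x in {x | dG x (czApex c r) ≤ czReach * r} \ czBox c (2 * L) (2 * r), maxHeat A x ∂ρG ≤
      ENNReal.ofReal (18 * heatConst * (32 * π * czReach)) := by
  have hr := h.radius_pos
  have hN := heatConst_pos
  refine hA.setLIntegral_maxHeat_le (measurableSet_czBox _ _ _)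
    ((measurableSet_dG_le _ _).diff (measurableSet_czBox _ _ _))
    (Φ := fun x w ↦ ENNReal.ofReal (18 * heatConst) *
      radialKernel (fun q ↦ shellProfile (r / 4) (2 * czReach * r) q.1) x w)
    ((measurable_uncurry_radialKernel
      ((measurable_shellProfile _ _).comp measurable_fst)).const_mul _) ?_ ?_
  · rintro x ⟨hnear, hx'⟩ hx t ht
    refine ⟨0, fun w hw ↦ ?_⟩
    rw [sub_zero]
    exact enorm_convKernel_le_of_dG_mem_Icc ht (by positivity) hx
      (height_pos_of_mem_czBox h.height_pos hw)
      ⟨h.div_four_le_dG hx hw hx', h.dG_le_of_dG_czApex_le hw hx hnear⟩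
  · intro w hw
    rw [lintegral_const_mul' _ _ ENNReal.ofReal_ne_top]
    refine (mul_le_mul_right (lintegral_radialKernel_shellProfile_le (s := r / 4) (by positivity)
      (height_pos_of_mem_czBox h.height_pos hw)) _).trans_eq ?_
    rw [← ENNReal.ofReal_mul (by positivity)]
    congr 1
    field_simp
    ring

lemma lintegral_segmentPath_gradProfile_le {w q : G} (hr : 0 < r) (hw : 0 < w.2.2)
    (hwq : w.2.2 < q.2.2) :
    ∫⁻ x, (∫⁻ z in Icc (0 : ℝ) 1, radialKernel (gradProfile r) x (segmentPath w q z)) ∂ρG ≤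
      ENNReal.ofReal (8 * π / r) := by
  have hpath : Measurable fun y : G × ℝ ↦ (y.1, segmentPath w q y.2) :=
    measurable_fst.prodMk ((contDiff_segmentPath w q).continuous.measurable.comp measurable_snd)
  have hmeas := (measurable_uncurry_radialKernel (measurable_gradProfile r)).comp hpath
  calc ∫⁻ x, (∫⁻ z in Icc (0 : ℝ) 1, radialKernel (gradProfile r) x (segmentPath w q z)) ∂ρG
      = ∫⁻ z in Icc (0 : ℝ) 1, (∫⁻ x, radialKernel (gradProfile r) x (segmentPath w q z) ∂ρG) :=
        lintegral_lintegral_swap hmeas.aemeasurable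
    _ ≤ ∫⁻ _ in Icc (0 : ℝ) 1, ENNReal.ofReal (8 * π / r) := lintegral_mono fun z ↦
        lintegral_radialKernel_gradProfile_le hr (segmentPath_height_pos hw hwq z)
    _ = ENNReal.ofReal (8 * π / r) := by simp

lemma IsCZParam.enorm_convKernel_sub_czApex_le {t : ℝ} {w : G} (h : IsCZParam c L r)
    (hw : w ∈ czBox c L r) (ht : 0 < t) (hx : 0 < x.2.2)
    (hfar : czReach * r ≤ dG x (czApex c r)) :
    ‖convKernel t x w - convKernel t x (czApex c r)‖ₑ ≤
      ENNReal.ofReal (286 * heatConst * (czReach * r)) * ∫⁻ z in Icc (0 : ℝ) 1,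
        radialKernel (gradProfile r) x (segmentPath w (czApex c r) z) := by
  have hr := h.radius_pos
  have hw₀ := height_pos_of_mem_czBox h.height_pos hw
  have hwq := height_lt_czApex_height h.height_pos hr hw
  have hsegment := enorm_convKernel_sub_le (p := segmentPath w (czApex c r)) zero_le_one ht
    (mul_pos czReach_pos hr).le hr hx (contDiff_segmentPath _ _)
    (fun z _ ↦ hasDerivAt_segmentPath _ _ z) (fun z _ ↦ h.sq_segmentVelocity_czApex_le hw z)
    (fun z _ ↦ segmentPath_height_pos hw₀ hwq z)
    (fun z hz ↦ h.radius_le_dG_segmentPath hw hx hfar hz)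
  rwa [segmentPath_zero, segmentPath_one hw₀ hwq, enorm_sub_rev] at hsegment

lemma IsAtomOn.setLIntegral_maxHeat_far_le (hA : IsAtomOn A (czBox c L r))
    (h : IsCZParam c L r) :
    ∫⁻ x in {x | dG x (czApex c r) ≤ czReach * r}ᶜ, maxHeat A x ∂ρG ≤
      ENNReal.ofReal (286 * heatConst * (8 * π * czReach)) := by
  have hr := h.radius_pos
  have hN := heatConst_pos
  have hK := czReach_pos
  have hmeas : Measurable fun y : (G × G) × ℝ ↦
      radialKernel (gradProfile r) y.1.1 (segmentPath y.1.2 (czApex c r) y.2) :=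
    (measurable_uncurry_radialKernel (measurable_gradProfile r)).comp
      ((measurable_fst.comp measurable_fst).prodMk ((measurable_segmentPath (czApex c r)).comp
        ((measurable_snd.comp measurable_fst).prodMk measurable_snd)))
  refine hA.setLIntegral_maxHeat_le (measurableSet_czBox _ _ _) (measurableSet_dG_le _ _).compl
    (Φ := fun x w ↦ ENNReal.ofReal (286 * heatConst * (czReach * r)) * ∫⁻ z in Icc (0 : ℝ) 1,
      radialKernel (gradProfile r) x (segmentPath w (czApex c r) z))
    (hmeas.lintegral_prod_right'.const_mul _) ?_ ?_
  · intro x hfar hx t ht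
    exact ⟨_, fun w hw ↦ h.enorm_convKernel_sub_czApex_le hw ht hx (le_of_not_ge hfar)⟩
  · intro w hw
    rw [lintegral_const_mul' _ _ ENNReal.ofReal_ne_top]
    refine (mul_le_mul_right (lintegral_segmentPath_gradProfile_le hr
      (height_pos_of_mem_czBox h.height_pos hw)
      (height_lt_czApex_height h.height_pos hr hw)) _).trans_eq ?_
    rw [← ENNReal.ofReal_mul (by positivity)]
    congr 1
    field_simp

end Atoms

theorem maxHeat_uniform_on_atoms :
    ∃ κ > (0 : ℝ), ∀ A : G → ℝ, IsAtomG A →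
      ∫⁻ x, maxHeat A x ∂ρG ≤ ENNReal.ofReal κ := by
  have hN := heatConst_pos
  have hK := czReach_pos
  refine ⟨8 + (18 * heatConst * (32 * π * czReach) + 286 * heatConst * (8 * π * czReach)),
    by positivity, ?_⟩
  rintro A ⟨hint, R, hR, hsupp, hbound, hmean⟩
  obtain ⟨c, L, r, h, rfl⟩ := exists_isCZParam hR
  have hA : IsAtomOn A (czBox c L r) := ⟨hint, hsupp, hbound, hmean⟩
  set near : Set G := {x | dG x (czApex c r) ≤ czReach * r}
  have hcover : univ ⊆ czBox c (2 * L) (2 * r) ∪ (near \ czBox c (2 * L) (2 * r) ∪ nearᶜ) := by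
    rw [← union_assoc, union_sdiff_self, union_assoc, union_compl_self, union_univ]
  calc ∫⁻ x, maxHeat A x ∂ρG
      = ∫⁻ x in univ, maxHeat A x ∂ρG := (setLIntegral_univ _).symm
    _ ≤ (∫⁻ x in czBox c (2 * L) (2 * r), maxHeat A x ∂ρG) +
          ((∫⁻ x in near \ czBox c (2 * L) (2 * r), maxHeat A x ∂ρG) +
            ∫⁻ x in nearᶜ, maxHeat A x ∂ρG) :=
        (lintegral_mono_set hcover).trans <| (lintegral_union_le _ _ _).trans <|
          add_le_add_right (lintegral_union_le _ _ _) _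
    _ ≤ _ := by
        rw [ENNReal.ofReal_add (by norm_num) (by positivity), ENNReal.ofReal_ofNat,
          ENNReal.ofReal_add (by positivity) (by positivity)]
        exact add_le_add (hA.setLIntegral_maxHeat_double_le h)
          (add_le_add (hA.setLIntegral_maxHeat_near_le h) (hA.setLIntegral_maxHeat_far_le h))
end
end

section
/- There exists a constant C > 0 such that for every L > 2, the function f_L = χ_{R_L} − χ_{R₀} satisfies ‖f_L‖_{H¹} ≥ C log L. -/
open MeasureTheory Real Filter Set
open scoped ENNReal

noncomputable section

/-!
`H¹` pairs with bounded functions `g` by `|∫ f g dρ| ≤ ‖g‖_{BMO} ‖f‖_{H¹}`, since the vanishing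
integral of an atom allows subtracting from `g` its mean over the supporting set. Both `ρ` and the
Calderón–Zygmund sets are products, hence a function of `x₁` alone has at most the same `BMO` norm
on `G` as on the line. Take `g` to be the logarithm of `|x₁|` truncated to `[0, log L]`: as a
Lipschitz image of `log`, its `BMO` norm is bounded independently of `L`, while it vanishes on `R₀`
and equals `log L` on half of `R_L`, so that `∫ f_L g dρ` is of order `log L`.

That `f_L` does belong to `H¹` is part of the argument: `H1norm` is an infimum of reals, which is
`0` for a function without atomic decompositions.
-/

open scoped NNReal Topology

section Average

variable {α E : Type*} [MeasurableSpace α] {μ : Measure α} [IsFiniteMeasure μ]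
  [NormedAddCommGroup E] [NormedSpace ℝ E] [CompleteSpace E]

lemma measure_univ_mul_enorm_sub_average_le {f : α → E} (hf : Integrable f μ) (k : E) :
    μ univ * ‖k - ⨍ y, f y ∂μ‖ₑ ≤ ∫⁻ x, ‖f x - k‖ₑ ∂μ :=
  calc μ univ * ‖k - ⨍ y, f y ∂μ‖ₑ = ‖∫ _, (k - ⨍ y, f y ∂μ) ∂μ‖ₑ := by
        rw [integral_const, enorm_smul, Real.enorm_of_nonneg measureReal_nonneg,
          ofReal_measureReal]
    _ = ‖∫ x, (k - f x) ∂μ‖ₑ := by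
        rw [integral_sub (integrable_const k) (integrable_const _), integral_average,
          integral_sub (integrable_const k) hf]
    _ ≤ ∫⁻ x, ‖k - f x‖ₑ ∂μ := enorm_integral_le_lintegral_enorm _
    _ = ∫⁻ x, ‖f x - k‖ₑ ∂μ := by simp only [enorm_sub_rev]

lemma lintegral_enorm_sub_average_le {f : α → E} (hf : AEStronglyMeasurable f μ) (k : E) :
    ∫⁻ x, ‖f x - ⨍ y, f y ∂μ‖ₑ ∂μ ≤ 2 * ∫⁻ x, ‖f x - k‖ₑ ∂μ := by
  rcases eq_top_or_lt_top (∫⁻ x, ‖f x - k‖ₑ ∂μ) with htop | hfin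
  · rw [htop, ENNReal.mul_top two_ne_zero]
    exact le_top
  have hfi : Integrable f μ := by
    have hfk : Integrable (fun x => f x - k) μ := ⟨hf.sub aestronglyMeasurable_const, hfin⟩
    exact (hfk.add (integrable_const k)).congr (.of_forall fun x => sub_add_cancel (f x) k)
  calc ∫⁻ x, ‖f x - ⨍ y, f y ∂μ‖ₑ ∂μ
      ≤ ∫⁻ x, (‖f x - k‖ₑ + ‖k - ⨍ y, f y ∂μ‖ₑ) ∂μ := by
        refine lintegral_mono fun x => ?_
        simpa only [sub_add_sub_cancel] using enorm_add_le (f x - k) (k - ⨍ y, f y ∂μ)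
    _ = ∫⁻ x, ‖f x - k‖ₑ ∂μ + μ univ * ‖k - ⨍ y, f y ∂μ‖ₑ := by
        rw [lintegral_add_right _ measurable_const, lintegral_const, mul_comm (μ univ)]
    _ ≤ 2 * ∫⁻ x, ‖f x - k‖ₑ ∂μ := by
        rw [two_mul]
        gcongr
        exact measure_univ_mul_enorm_sub_average_le hfi k

end Average

/-! ### Bounded mean oscillation on the line -/

section LineBMO

variable {h : ℝ → ℝ}

lemma lintegral_enorm_sub_mean_le_lineBMO {a b : ℝ} (hab : a < b) :
    ∫⁻ s in Icc a b, ‖h s - (∫ u in Icc a b, h u) / (b - a)‖ₑ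
      ≤ lineBMO h * ENNReal.ofReal (b - a) := by
  have hle : (ENNReal.ofReal (b - a))⁻¹ *
      ∫⁻ s in Icc a b, ‖h s - (∫ u in Icc a b, h u) / (b - a)‖ₑ ≤ lineBMO h := by
    simp only [Real.enorm_eq_ofReal_abs]
    exact le_iSup₂_of_le a b (le_iSup_of_le hab le_rfl)
  rwa [ENNReal.inv_mul_le_iff (ENNReal.ofReal_pos.2 (sub_pos.2 hab)).ne' ENNReal.ofReal_ne_top,
    mul_comm] at hle

lemma lineBMO_le_two_mul (hh : AEStronglyMeasurable h) {C : ℝ≥0∞}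
    (hC : ∀ a b, a < b → ∃ k, ∫⁻ s in Icc a b, ‖h s - k‖ₑ ≤ C * ENNReal.ofReal (b - a)) :
    lineBMO h ≤ 2 * C := by
  refine iSup₂_le fun a b => iSup_le fun hab => ?_
  obtain ⟨k, hk⟩ := hC a b hab
  have hmean : (∫ u in Icc a b, h u) / (b - a) = ⨍ u in Icc a b, h u := by
    rw [setAverage_eq, Real.volume_real_Icc_of_le hab.le, smul_eq_mul, div_eq_inv_mul]
  rw [ENNReal.inv_mul_le_iff (ENNReal.ofReal_pos.2 (sub_pos.2 hab)).ne' ENNReal.ofReal_ne_top,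
    hmean]
  simp only [← Real.enorm_eq_ofReal_abs]
  calc ∫⁻ s in Icc a b, ‖h s - ⨍ u in Icc a b, h u‖ₑ
      ≤ 2 * ∫⁻ s in Icc a b, ‖h s - k‖ₑ := lintegral_enorm_sub_average_le hh.restrict k
    _ ≤ 2 * (C * ENNReal.ofReal (b - a)) := by gcongr
    _ = ENNReal.ofReal (b - a) * (2 * C) := by ring

lemma lineBMO_lipschitz_comp_le (hh : Measurable h) {φ : ℝ → ℝ} {K : ℝ≥0}
    (hφ : LipschitzWith K φ) : lineBMO (φ ∘ h) ≤ 2 * (K * lineBMO h) := by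
  refine lineBMO_le_two_mul (hφ.continuous.measurable.comp hh).aestronglyMeasurable
    fun a b hab => ⟨φ ((∫ u in Icc a b, h u) / (b - a)), ?_⟩
  calc ∫⁻ s in Icc a b, ‖(φ ∘ h) s - φ ((∫ u in Icc a b, h u) / (b - a))‖ₑ
      ≤ ∫⁻ s in Icc a b, K * ‖h s - (∫ u in Icc a b, h u) / (b - a)‖ₑ := by
        refine lintegral_mono fun s => ?_
        simpa only [edist_eq_enorm_sub, Function.comp_apply] using hφ (h s) _
    _ = K * ∫⁻ s in Icc a b, ‖h s - (∫ u in Icc a b, h u) / (b - a)‖ₑ :=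
        lintegral_const_mul' _ _ ENNReal.coe_ne_top
    _ ≤ K * (lineBMO h * ENNReal.ofReal (b - a)) := by
        gcongr
        exact lintegral_enorm_sub_mean_le_lineBMO hab
    _ = K * lineBMO h * ENNReal.ofReal (b - a) := (mul_assoc _ _ _).symm

end LineBMO

lemma mul_log_sub_log_le {x y : ℝ} (hx : 0 ≤ x) (hy : 0 < y) :
    x * (log y - log x) ≤ y - x := by
  rcases hx.eq_or_lt with rfl | hx
  · simpa using hy.le
  calc x * (log y - log x) = x * log (y / x) := by rw [log_div hy.ne' hx.ne']
    _ ≤ x * (y / x - 1) := by gcongr; exact log_le_sub_one_of_pos (div_pos hy hx)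
    _ = y - x := by field_simp

lemma abs_mul_log_sub_log_le {x y : ℝ} (hxy : |x| ≤ y) (hy : 0 < y) :
    |x * (log y - log x)| ≤ y - |x| := by
  rcases eq_or_ne x 0 with rfl | hx
  · simpa using hy.le
  have hlog : 0 ≤ log y - log x := by
    rw [← log_abs x]
    exact sub_nonneg.2 (log_le_log (abs_pos.2 hx) hxy)
  rw [abs_mul, abs_of_nonneg hlog, ← log_abs x]
  exact mul_log_sub_log_le (abs_nonneg x) hy

lemma integral_log_max_sub_log_le {a b : ℝ} (hab : a < b) :
    ∫ s in a..b, (log (max |a| |b|) - log s) ≤ 2 * (b - a) := by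
  set M := max |a| |b|
  have hMpos : 0 < M := by
    rcases eq_or_ne a 0 with rfl | ha
    · exact lt_max_of_lt_right (abs_pos.2 hab.ne')
    · exact lt_max_of_lt_left (abs_pos.2 ha)
  have ha := (abs_le.1 (abs_mul_log_sub_log_le (le_max_left |a| |b|) hMpos)).1
  have hb := (abs_le.1 (abs_mul_log_sub_log_le (le_max_right |a| |b|) hMpos)).2
  have hmax : 2 * M ≤ |a| + |b| + (b - a) := by
    have hsup := two_nsmul_sup_eq_add_add_abs_sub |a| |b|
    have hdist := abs_abs_sub_abs_le b a
    rw [abs_of_pos (sub_pos.2 hab)] at hdist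
    rw [nsmul_eq_mul, Nat.cast_ofNat] at hsup
    linarith
  calc ∫ s in a..b, (log M - log s)
      = b * (log M - log b) - a * (log M - log a) + (b - a) := by
        rw [intervalIntegral.integral_sub intervalIntegrable_const
          intervalIntegral.intervalIntegrable_log', intervalIntegral.integral_const, integral_log,
          smul_eq_mul]
        ring
    _ ≤ 2 * (b - a) := by linarith

lemma lintegral_enorm_log_sub_log_max_le {a b : ℝ} (hab : a < b) :
    ∫⁻ s in Icc a b, ‖log s - log (max |a| |b|)‖ₑ ≤ 2 * ENNReal.ofReal (b - a) := by
  set M := max |a| |b|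
  have hint : IntegrableOn (fun s => log M - log s) (Icc a b) := by
    rw [integrableOn_Icc_iff_integrableOn_Ioc,
      ← intervalIntegrable_iff_integrableOn_Ioc_of_le hab.le]
    exact intervalIntegrable_const.sub intervalIntegral.intervalIntegrable_log'
  have hnorm : ∀ᵐ s ∂volume.restrict (Icc a b), ‖log M - log s‖ = log M - log s := by
    filter_upwards [ae_restrict_mem measurableSet_Icc,
      ae_restrict_of_ae (Measure.ae_ne volume 0)] with s hs hs0
    refine Real.norm_of_nonneg (sub_nonneg.2 ?_)
    rw [← log_abs s]
    exact log_le_log (abs_pos.2 hs0) (abs_le_max_abs_abs hs.1 hs.2)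
  calc ∫⁻ s in Icc a b, ‖log s - log M‖ₑ
      = ∫⁻ s in Icc a b, ‖log M - log s‖ₑ := by simp only [enorm_sub_rev]
    _ = ENNReal.ofReal (∫ s in Icc a b, ‖log M - log s‖) :=
        (ofReal_integral_norm_eq_lintegral_enorm hint).symm
    _ = ENNReal.ofReal (∫ s in a..b, (log M - log s)) := by
        rw [integral_congr_ae hnorm, integral_Icc_eq_integral_Ioc,
          ← intervalIntegral.integral_of_le hab.le]
    _ ≤ ENNReal.ofReal (2 * (b - a)) := ENNReal.ofReal_le_ofReal (integral_log_max_sub_log_le hab)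
    _ = 2 * ENNReal.ofReal (b - a) := by
        rw [ENNReal.ofReal_mul zero_le_two, ENNReal.ofReal_ofNat]

lemma lineBMO_log_le : lineBMO log ≤ 4 :=
  calc lineBMO log ≤ 2 * 2 :=
        lineBMO_le_two_mul Real.measurable_log.aestronglyMeasurable
          fun a b hab => ⟨log (max |a| |b|), lintegral_enorm_log_sub_log_max_le hab⟩
    _ = 4 := by norm_num

/-- The logarithm of `|s|` truncated to `[0, log L]` for `L ≥ 1`: the bounded `BMO` function on the
line that is tested against `f_L`. The convention `log 0 = 0` makes it vanish at `0`. -/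
def truncLog (L s : ℝ) : ℝ := max 0 (min (log s) (log L))

lemma measurable_truncLog (L : ℝ) : Measurable (truncLog L) :=
  measurable_const.max (Real.measurable_log.min measurable_const)

lemma truncLog_nonneg (L s : ℝ) : 0 ≤ truncLog L s := le_max_left _ _

lemma norm_truncLog_le {L : ℝ} (hL : 1 ≤ L) (s : ℝ) : ‖truncLog L s‖ ≤ log L := by
  rw [Real.norm_of_nonneg (truncLog_nonneg L s)]
  exact max_le (log_nonneg hL) (min_le_right _ _)

lemma truncLog_of_abs_le_one (L : ℝ) {s : ℝ} (hs : |s| ≤ 1) : truncLog L s = 0 := by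
  have hlog : log s ≤ 0 := by
    rw [← log_abs]
    exact log_nonpos (abs_nonneg s) hs
  exact max_eq_left ((min_le_left _ _).trans hlog)

lemma truncLog_of_le {L s : ℝ} (hL : 1 ≤ L) (hs : L ≤ s) : truncLog L s = log L := by
  rw [truncLog, min_eq_right (log_le_log (by positivity) hs), max_eq_right (log_nonneg hL)]

lemma lineBMO_truncLog_le (L : ℝ) : lineBMO (truncLog L) ≤ 8 := by
  have htrunc : LipschitzWith 1 fun u : ℝ => max 0 (min u (log L)) :=
    (LipschitzWith.id.min_const (log L)).const_max 0
  have hcomp : truncLog L = (fun u => max 0 (min u (log L))) ∘ log := rfl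
  rw [hcomp]
  calc lineBMO ((fun u => max 0 (min u (log L))) ∘ log) ≤ 2 * ((1 : ℝ≥0) * lineBMO log) :=
        lineBMO_lipschitz_comp_le Real.measurable_log htrunc
    _ ≤ 2 * ((1 : ℝ≥0) * 4) := by
        gcongr
        exact lineBMO_log_le
    _ = 8 := by
        rw [ENNReal.coe_one]
        norm_num

/-! ### The right Haar measure on boxes -/

/-- The measure `da/a` on `(0, ∞)`, extended by zero to the line: the Haar measure of the
dilation factor `ℝ⁺` of `G`. -/
def dilationHaar : Measure ℝ :=
  volume.withDensity fun a => ENNReal.ofReal (if 0 < a then a⁻¹ else 0)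

instance : SFinite dilationHaar := by
  unfold dilationHaar
  infer_instance

lemma measurable_dilationHaar_density :
    Measurable fun a : ℝ => ENNReal.ofReal (if 0 < a then a⁻¹ else 0) :=
  (Measurable.ite measurableSet_Ioi measurable_inv measurable_const).ennreal_ofReal

lemma ρG_eq_prod : ρG = (volume : Measure ℝ).prod ((volume : Measure ℝ).prod dilationHaar) := by
  rw [dilationHaar, prod_withDensity_right measurable_dilationHaar_density,
    prod_withDensity_right]
  · rfl
  · exact measurable_dilationHaar_density.comp measurable_snd

lemma dilationHaar_Icc {u v : ℝ} (hu : 0 < u) (huv : u ≤ v) :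
    dilationHaar (Icc u v) = ENNReal.ofReal (log (v / u)) := by
  have hpos : ∀ a ∈ Icc u v, 0 < a := fun a ha => hu.trans_le ha.1
  have hint : IntegrableOn (fun a : ℝ => a⁻¹) (Icc u v) :=
    ContinuousOn.integrableOn_Icc (continuousOn_inv₀.mono fun a ha => (hpos a ha).ne')
  rw [dilationHaar, withDensity_apply _ measurableSet_Icc]
  calc ∫⁻ a in Icc u v, ENNReal.ofReal (if 0 < a then a⁻¹ else 0)
      = ∫⁻ a in Icc u v, ENNReal.ofReal a⁻¹ :=
        setLIntegral_congr_fun measurableSet_Icc fun a ha => by rw [if_pos (hpos a ha)]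
    _ = ENNReal.ofReal (∫ a in Icc u v, a⁻¹) := by
        refine (ofReal_integral_eq_lintegral_ofReal hint ?_).symm
        filter_upwards [ae_restrict_mem measurableSet_Icc] with a ha
        exact (inv_pos.2 (hpos a ha)).le
    _ = ENNReal.ofReal (log (v / u)) := by
        rw [integral_Icc_eq_integral_Ioc, ← intervalIntegral.integral_of_le huv,
          integral_inv_of_pos hu (hu.trans_le huv)]

lemma ρG_box {u v : ℝ} (hu : 0 < u) (huv : u ≤ v) (a b c d : ℝ) :
    ρG (Icc a b ×ˢ Icc c d ×ˢ Icc u v) =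
      ENNReal.ofReal (b - a) * (ENNReal.ofReal (d - c) * ENNReal.ofReal (log (v / u))) := by
  rw [ρG_eq_prod, Measure.prod_prod, Measure.prod_prod, Real.volume_Icc, Real.volume_Icc,
    dilationHaar_Icc hu huv]

/-! ### Calderón–Zygmund sets -/

lemma IsCZ.exists_eq_prod {R : Set G} (hR : IsCZ R) :
    ∃ (a b : ℝ) (S : Set (ℝ × ℝ)), a < b ∧ R = Icc a b ×ˢ S ∧ MeasurableSet S ∧
      (volume.prod dilationHaar) S ≠ 0 ∧ (volume.prod dilationHaar) S ≠ ⊤ := by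
  obtain ⟨c, L, r, hc, hL, hr, rfl, -, -⟩ := hR
  have hlt : c.2.2 * exp (-r) < c.2.2 * exp r := by gcongr; linarith
  have hpos : 0 < c.2.2 * exp (-r) := by positivity
  have hS : (volume.prod dilationHaar) (Icc (c.2.1 - L / 2) (c.2.1 + L / 2) ×ˢ
        Icc (c.2.2 * exp (-r)) (c.2.2 * exp r)) =
      ENNReal.ofReal L * ENNReal.ofReal (log (c.2.2 * exp r / (c.2.2 * exp (-r)))) := by
    rw [Measure.prod_prod, Real.volume_Icc, dilationHaar_Icc hpos hlt.le]
    congr 2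
    ring
  refine ⟨_, _, _, by linarith, rfl, measurableSet_Icc.prod measurableSet_Icc, ?_, ?_⟩ <;> rw [hS]
  · exact mul_ne_zero (ENNReal.ofReal_pos.2 hL).ne'
      (ENNReal.ofReal_pos.2 (log_pos ((one_lt_div hpos).2 hlt))).ne'
  · finiteness

lemma IsCZ.measurableSet {R : Set G} (hR : IsCZ R) : MeasurableSet R := by
  obtain ⟨a, b, S, -, rfl, hS, -, -⟩ := hR.exists_eq_prod
  exact measurableSet_Icc.prod hS

lemma IsCZ.ρG_ne_zero {R : Set G} (hR : IsCZ R) : ρG R ≠ 0 := by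
  obtain ⟨a, b, S, hab, rfl, -, hS, -⟩ := hR.exists_eq_prod
  rw [ρG_eq_prod, Measure.prod_prod, Real.volume_Icc]
  exact mul_ne_zero (ENNReal.ofReal_pos.2 (sub_pos.2 hab)).ne' hS

lemma IsCZ.ρG_ne_top {R : Set G} (hR : IsCZ R) : ρG R ≠ ⊤ := by
  obtain ⟨a, b, S, -, rfl, -, -, hS⟩ := hR.exists_eq_prod
  rw [ρG_eq_prod, Measure.prod_prod, Real.volume_Icc]
  exact ENNReal.mul_ne_top ENNReal.ofReal_ne_top hS

/-- The Calderón–Zygmund set centred at the identity with side length `e^{2r}`, the least one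
admissible when `r ≥ 1`. -/
def centeredCZ (r : ℝ) : Set G :=
  Icc (-(exp (2 * r) / 2)) (exp (2 * r) / 2) ×ˢ
    Icc (-(exp (2 * r) / 2)) (exp (2 * r) / 2) ×ˢ Icc (exp (-r)) (exp r)

lemma isCZ_centeredCZ {r : ℝ} (hr : 1 ≤ r) : IsCZ (centeredCZ r) := by
  refine ⟨gE, exp (2 * r), r, one_pos, exp_pos _, by linarith, by simp [gE, centeredCZ],
    fun h => absurd h hr.not_gt, fun _ => ?_⟩
  simp only [gE, one_mul]
  exact ⟨le_rfl, exp_lt_exp.2 (by linarith)⟩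

lemma czBMO_comp_fst_le {h : ℝ → ℝ} (hh : Measurable h) :
    czBMO (fun x => h x.1) ≤ lineBMO h := by
  refine iSup₂_le fun R hR => ?_
  obtain ⟨a, b, S, hab, rfl, -, hS0, hStop⟩ := hR.exists_eq_prod
  set m := (volume.prod dilationHaar) S
  have hℓ : 0 < b - a := sub_pos.2 hab
  have hrestrict : ρG.restrict (Icc a b ×ˢ S) =
      (volume.restrict (Icc a b)).prod ((volume.prod dilationHaar).restrict S) := by
    rw [ρG_eq_prod, Measure.prod_restrict]
  have hρ : ρG (Icc a b ×ˢ S) = ENNReal.ofReal (b - a) * m := by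
    rw [ρG_eq_prod, Measure.prod_prod, Real.volume_Icc]
  have hmean : czMean (fun x => h x.1) (Icc a b ×ˢ S) = (∫ u in Icc a b, h u) / (b - a) := by
    have hm : m.toReal ≠ 0 := ENNReal.toReal_ne_zero.2 ⟨hS0, hStop⟩
    rw [czMean, hrestrict, integral_fun_fst, hρ, ENNReal.toReal_mul,
      ENNReal.toReal_ofReal hℓ.le, smul_eq_mul, measureReal_restrict_apply_univ, measureReal_def,
      mul_comm (b - a), mul_div_mul_left _ _ hm]
  have hosc : ∫⁻ x in Icc a b ×ˢ S, ‖h x.1 - (∫ u in Icc a b, h u) / (b - a)‖ₑ ∂ρG =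
      (∫⁻ s in Icc a b, ‖h s - (∫ u in Icc a b, h u) / (b - a)‖ₑ) * m := by
    rw [hrestrict, lintegral_prod _ (by fun_prop)]
    simp only [lintegral_const, Measure.restrict_apply_univ]
    exact lintegral_mul_const' _ _ hStop
  simp only [← Real.enorm_eq_ofReal_abs]
  rw [ENNReal.inv_mul_le_iff hR.ρG_ne_zero hR.ρG_ne_top, hmean, hosc, hρ]
  calc (∫⁻ s in Icc a b, ‖h s - (∫ u in Icc a b, h u) / (b - a)‖ₑ) * m
      ≤ lineBMO h * ENNReal.ofReal (b - a) * m := by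
        gcongr
        exact lintegral_enorm_sub_mean_le_lineBMO hab
    _ = ENNReal.ofReal (b - a) * m * lineBMO h := by ring

/-! ### Duality between `H¹` and `BMO` -/

lemma IsAtomG.enorm_integral_mul_le {A g : G → ℝ} (hA : IsAtomG A)
    (hAg : Integrable (fun x => A x * g x) ρG) :
    ‖∫ x, A x * g x ∂ρG‖ₑ ≤ czBMO g := by
  obtain ⟨hAi, R, hR, hsupp, hsup, hmean⟩ := hA
  have hcancel : ∫ x, A x * g x ∂ρG = ∫ x, A x * (g x - czMean g R) ∂ρG := by
    simp only [mul_sub]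
    rw [integral_sub hAg (hAi.mul_const _), integral_mul_const, hmean, zero_mul, sub_zero]
  have hbound : ∀ᵐ x ∂ρG, ‖A x * (g x - czMean g R)‖ₑ ≤
      R.indicator (fun x => (ρG R)⁻¹ * ‖g x - czMean g R‖ₑ) x := by
    filter_upwards [enorm_ae_le_eLpNormEssSup A ρG] with x hx
    by_cases hxR : x ∈ R
    · rw [indicator_of_mem hxR, enorm_mul]
      gcongr
      exact hx.trans hsup
    · simp [hsupp x hxR]
  calc ‖∫ x, A x * g x ∂ρG‖ₑ
      ≤ ∫⁻ x, ‖A x * (g x - czMean g R)‖ₑ ∂ρG := by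
        rw [hcancel]
        exact enorm_integral_le_lintegral_enorm _
    _ ≤ ∫⁻ x, R.indicator (fun x => (ρG R)⁻¹ * ‖g x - czMean g R‖ₑ) x ∂ρG :=
        lintegral_mono_ae hbound
    _ = (ρG R)⁻¹ * ∫⁻ x in R, ‖g x - czMean g R‖ₑ ∂ρG := by
        rw [lintegral_indicator hR.measurableSet,
          lintegral_const_mul' _ _ (ENNReal.inv_ne_top.2 hR.ρG_ne_zero)]
    _ ≤ czBMO g := by
        simp only [Real.enorm_eq_ofReal_abs]
        exact le_iSup₂_of_le R hR le_rfl

section Duality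

variable {f g : G → ℝ} {K : ℝ}

lemma IsH1Decomp.tendsto_integral_mul {lam : ℕ → ℝ} {A : ℕ → G → ℝ}
    (h : IsH1Decomp f lam A) (hf : AEStronglyMeasurable f ρG) (hg : AEStronglyMeasurable g ρG)
    (hK : ∀ x, ‖g x‖ ≤ K) :
    Tendsto (fun N => ∑ j ∈ Finset.range N, lam j * ∫ x, A j x * g x ∂ρG) atTop
      (𝓝 (∫ x, f x * g x ∂ρG)) := by
  obtain ⟨hA, -, hlim⟩ := h
  have hAg : ∀ j, Integrable (fun x => lam j * (A j x * g x)) ρG := fun j =>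
    ((hA j).1.mul_bdd hg (.of_forall hK)).const_mul _
  have hsum : ∀ N, ∑ j ∈ Finset.range N, lam j * ∫ x, A j x * g x ∂ρG =
      ∫ x, ∑ j ∈ Finset.range N, lam j * (A j x * g x) ∂ρG := fun N => by
    rw [integral_finsetSum _ fun j _ => hAg j]
    simp only [integral_const_mul]
  simp only [hsum]
  refine tendsto_integral_of_L1' _ (hf.mul hg)
    (.of_forall fun N => integrable_finsetSum _ fun j _ => hAg j) ?_
  have hlimK := ENNReal.Tendsto.const_mul hlim (.inr (ENNReal.ofReal_ne_top (r := K)))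
  rw [mul_zero] at hlimK
  refine tendsto_of_tendsto_of_tendsto_of_le_of_le tendsto_const_nhds hlimK
    (fun _ => zero_le) fun N => ?_
  refine eLpNorm_le_mul_eLpNorm_of_ae_le_mul (.of_forall fun x => ?_) 1
  have hfactor : ∑ j ∈ Finset.range N, lam j * (A j x * g x) - f x * g x =
      g x * -(f x - ∑ j ∈ Finset.range N, lam j * A j x) := by
    simp only [← mul_assoc, ← Finset.sum_mul]
    ring
  calc ‖∑ j ∈ Finset.range N, lam j * (A j x * g x) - f x * g x‖
      = ‖g x‖ * ‖f x - ∑ j ∈ Finset.range N, lam j * A j x‖ := by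
        rw [hfactor, norm_mul, norm_neg]
    _ ≤ K * ‖f x - ∑ j ∈ Finset.range N, lam j * A j x‖ := by
        gcongr
        exact hK x

lemma IsH1Decomp.enorm_integral_mul_le {lam : ℕ → ℝ} {A : ℕ → G → ℝ}
    (h : IsH1Decomp f lam A) (hf : AEStronglyMeasurable f ρG) (hg : AEStronglyMeasurable g ρG)
    (hK : ∀ x, ‖g x‖ ≤ K) :
    ‖∫ x, f x * g x ∂ρG‖ₑ ≤ czBMO g * ∑' j, ‖lam j‖ₑ := by
  refine le_of_tendsto' (h.tendsto_integral_mul hf hg hK).enorm fun N => ?_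
  calc ‖∑ j ∈ Finset.range N, lam j * ∫ x, A j x * g x ∂ρG‖ₑ
      ≤ ∑ j ∈ Finset.range N, ‖lam j‖ₑ * ‖∫ x, A j x * g x ∂ρG‖ₑ := by
        simpa only [enorm_mul] using
          enorm_sum_le (Finset.range N) fun j => lam j * ∫ x, A j x * g x ∂ρG
    _ ≤ ∑ j ∈ Finset.range N, ‖lam j‖ₑ * czBMO g := by
        gcongr with j
        exact (h.1 j).enorm_integral_mul_le ((h.1 j).1.mul_bdd hg (.of_forall hK))
    _ = czBMO g * ∑ j ∈ Finset.range N, ‖lam j‖ₑ := by rw [← Finset.sum_mul, mul_comm]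
    _ ≤ czBMO g * ∑' j, ‖lam j‖ₑ := by
        gcongr
        exact ENNReal.sum_le_tsum _

lemma MemH1.abs_integral_mul_le (hf : MemH1 f) (hg : AEStronglyMeasurable g ρG)
    (hK : ∀ x, ‖g x‖ ≤ K) {C : ℝ≥0} (hC : czBMO g ≤ C) :
    |∫ x, f x * g x ∂ρG| ≤ C * H1norm f := by
  obtain ⟨hfi, lam₀, A₀, h₀⟩ := hf
  rw [H1norm, ← smul_eq_mul, ← Real.sInf_smul_of_nonneg C.coe_nonneg]
  refine le_csInf (Set.Nonempty.smul_set ⟨_, lam₀, A₀, h₀, rfl⟩) ?_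
  rintro _ ⟨_, ⟨lam, A, h, rfl⟩, rfl⟩
  refine (ENNReal.ofReal_le_ofReal_iff (by positivity)).1 ?_
  calc ENNReal.ofReal |∫ x, f x * g x ∂ρG|
      = ‖∫ x, f x * g x ∂ρG‖ₑ := (Real.enorm_eq_ofReal_abs _).symm
    _ ≤ czBMO g * ∑' j, ‖lam j‖ₑ := h.enorm_integral_mul_le hfi.1 hg hK
    _ ≤ C * ∑' j, ‖lam j‖ₑ := by gcongr
    _ = ENNReal.ofReal (C * ∑' j, |lam j|) := by
        rw [ENNReal.ofReal_mul C.coe_nonneg, ENNReal.ofReal_coe_nnreal,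
          ENNReal.ofReal_tsum_of_nonneg (fun _ => abs_nonneg _) h.2.1]
        simp only [Real.enorm_eq_ofReal_abs]

end Duality

lemma IsAtomG.memH1_const_mul {A : G → ℝ} (hA : IsAtomG A) (c : ℝ) :
    MemH1 (fun x => c * A x) := by
  refine ⟨hA.1.const_mul c, Pi.single 0 c, fun _ => A, fun _ => hA,
    summable_of_ne_finset_zero (s := {0}) fun j hj => ?_, ?_⟩
  · rw [Pi.single_eq_of_ne (Finset.notMem_singleton.1 hj), abs_zero]
  · refine tendsto_const_nhds.congr' ?_
    filter_upwards [eventually_gt_atTop 0] with N hN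
    have hsum : ∑ j ∈ Finset.range N, (Pi.single 0 c : ℕ → ℝ) j = c := by
      rw [Finset.sum_pi_single', if_pos (Finset.mem_range.2 hN)]
    simp only [← Finset.sum_mul, hsum, sub_self, eLpNorm_zero']

lemma IsCZ.memH1_of_bounded {f : G → ℝ} {R : Set G} {K : ℝ} (hR : IsCZ R)
    (hf : Integrable f ρG) (hsupp : ∀ x ∉ R, f x = 0) (hK : ∀ x, ‖f x‖ ≤ K)
    (hmean : ∫ x, f x ∂ρG = 0) : MemH1 f := by
  have hρ : 0 < ρG.real R := ENNReal.toReal_pos hR.ρG_ne_zero hR.ρG_ne_top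
  set c := max K 1 * ρG.real R with hc
  have hcpos : 0 < c := by positivity
  have hinv : (ρG R)⁻¹ = ENNReal.ofReal (ρG.real R)⁻¹ := by
    rw [ENNReal.ofReal_inv_of_pos hρ, ofReal_measureReal hR.ρG_ne_top]
  have hatom : IsAtomG fun x => c⁻¹ * f x := by
    refine ⟨hf.const_mul _, R, hR, fun x hx => mul_eq_zero_of_right _ (hsupp x hx), ?_,
      by rw [integral_const_mul, hmean, mul_zero]⟩
    rw [hinv, eLpNorm_exponent_top]
    refine eLpNormEssSup_le_of_ae_bound (.of_forall fun x => ?_)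
    calc ‖c⁻¹ * f x‖ = c⁻¹ * ‖f x‖ := by rw [norm_mul, Real.norm_of_nonneg (by positivity)]
      _ ≤ c⁻¹ * max K 1 := by gcongr; exact (hK x).trans (le_max_left _ _)
      _ = (ρG.real R)⁻¹ := by rw [hc]; field_simp
  simpa only [mul_inv_cancel_left₀ hcpos.ne'] using hatom.memH1_const_mul c

/-! ### The functions `f_L` -/

/-- The box over `[a, b]` with the same `x₂`- and dilation sides as `R₀` and `R_L`. -/
def slab (a b : ℝ) : Set G := Icc a b ×ˢ Icc (-1 : ℝ) 1 ×ˢ Icc (exp (-1)) (exp 1)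

lemma measurableSet_slab (a b : ℝ) : MeasurableSet (slab a b) :=
  measurableSet_Icc.prod (measurableSet_Icc.prod measurableSet_Icc)

lemma ρG_slab (a b : ℝ) : ρG (slab a b) = ENNReal.ofReal (b - a) * 4 := by
  rw [slab, ρG_box (exp_pos _) (exp_le_exp.2 (by norm_num)), ← exp_sub, log_exp,
    ← ENNReal.ofReal_mul (by norm_num)]
  norm_num

lemma integrable_indicator_slab (a b c : ℝ) :
    Integrable ((slab a b).indicator fun _ => c) ρG := by
  refine (integrable_indicator_iff (measurableSet_slab a b)).2 (integrableOn_const ?_)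
  rw [ρG_slab]
  finiteness

lemma integral_indicator_slab {a b : ℝ} (hab : a ≤ b) (c : ℝ) :
    ∫ x, (slab a b).indicator (fun _ => c) x ∂ρG = 4 * (b - a) * c := by
  rw [integral_indicator (measurableSet_slab a b), setIntegral_const, measureReal_def, ρG_slab,
    ENNReal.toReal_mul, ENNReal.toReal_ofReal (sub_nonneg.2 hab), ENNReal.toReal_ofNat,
    smul_eq_mul, mul_comm (b - a)]

lemma slab_subset_centeredCZ {a b r : ℝ} (hr : 1 ≤ r) (ha : -r ≤ a) (hb : b ≤ r) :
    slab a b ⊆ centeredCZ r := by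
  have hside : r ≤ exp (2 * r) / 2 := by linarith [add_one_le_exp (2 * r)]
  exact prod_mono (Icc_subset_Icc (by linarith) (by linarith))
    (prod_mono (Icc_subset_Icc (by linarith) (by linarith))
      (Icc_subset_Icc (exp_le_exp.2 (by linarith)) (exp_le_exp.2 hr)))

lemma fL_apply (L : ℝ) (x : G) :
    fL L x = (slab (L - 1) (L + 1)).indicator (fun _ => 1) x -
      (slab (-1) 1).indicator (fun _ => 1) x := rfl

lemma integrable_fL (L : ℝ) : Integrable (fL L) ρG :=
  (integrable_indicator_slab _ _ 1).sub (integrable_indicator_slab _ _ 1)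

lemma integral_fL (L : ℝ) : ∫ x, fL L x ∂ρG = 0 := by
  simp only [fL_apply]
  rw [integral_sub (integrable_indicator_slab _ _ 1) (integrable_indicator_slab _ _ 1),
    integral_indicator_slab (by linarith), integral_indicator_slab (by norm_num)]
  ring

lemma norm_fL_le_one (L : ℝ) (x : G) : ‖fL L x‖ ≤ 1 := by
  by_cases hRL : x ∈ RLset L <;> by_cases hR0 : x ∈ R0set <;> simp [fL, hRL, hR0]

lemma memH1_fL (L : ℝ) : MemH1 (fL L) := by
  have hr : 1 ≤ |L| + 1 := by linarith [abs_nonneg L]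
  refine (isCZ_centeredCZ hr).memH1_of_bounded (integrable_fL L) (fun x hx => ?_)
    (norm_fL_le_one L) (integral_fL L)
  rw [fL_apply, indicator_of_notMem fun h => hx (slab_subset_centeredCZ hr ?_ ?_ h),
    indicator_of_notMem fun h => hx (slab_subset_centeredCZ hr ?_ hr h), sub_zero]
  all_goals linarith [neg_abs_le L, le_abs_self L]

lemma indicator_slab_le_fL_mul_truncLog {L : ℝ} (hL : 1 ≤ L) (x : G) :
    (slab L (L + 1)).indicator (fun _ => log L) x ≤ fL L x * truncLog L x.1 := by
  have hR0 : (slab (-1) 1).indicator (fun _ => (1 : ℝ)) x * truncLog L x.1 = 0 := by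
    by_cases hx : x ∈ slab (-1) 1
    · rw [truncLog_of_abs_le_one L (abs_le.2 hx.1), mul_zero]
    · rw [indicator_of_notMem hx, zero_mul]
  rw [fL_apply, sub_mul, hR0, sub_zero]
  refine indicator_apply_le' (fun hx => ?_) fun _ =>
    mul_nonneg (indicator_nonneg (fun _ _ => zero_le_one) x) (truncLog_nonneg L x.1)
  have hxRL : x ∈ slab (L - 1) (L + 1) := ⟨⟨by linarith [hx.1.1], hx.1.2⟩, hx.2⟩
  rw [indicator_of_mem hxRL, one_mul, truncLog_of_le hL hx.1.1]

lemma four_mul_log_le_integral_fL_mul_truncLog {L : ℝ} (hL : 1 ≤ L) :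
    4 * log L ≤ ∫ x, fL L x * truncLog L x.1 ∂ρG := by
  have hint : Integrable (fun x => fL L x * truncLog L x.1) ρG :=
    (integrable_fL L).mul_bdd ((measurable_truncLog L).comp measurable_fst).aestronglyMeasurable
      (.of_forall fun x => norm_truncLog_le hL x.1)
  calc 4 * log L = ∫ x, (slab L (L + 1)).indicator (fun _ => log L) x ∂ρG := by
        rw [integral_indicator_slab (by linarith)]
        ring
    _ ≤ ∫ x, fL L x * truncLog L x.1 ∂ρG :=
        integral_mono (integrable_indicator_slab _ _ _) hint (indicator_slab_le_fL_mul_truncLog hL)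

theorem fL_H1norm_lower_general {L : ℝ} (hL : 1 ≤ L) : 1 / 2 * log L ≤ H1norm (fL L) := by
  have hBMO : czBMO (fun x => truncLog L x.1) ≤ (8 : ℝ≥0) :=
    (czBMO_comp_fst_le (measurable_truncLog L)).trans (lineBMO_truncLog_le L)
  have hdual : |∫ x, fL L x * truncLog L x.1 ∂ρG| ≤ (8 : ℝ≥0) * H1norm (fL L) :=
    (memH1_fL L).abs_integral_mul_le
      ((measurable_truncLog L).comp measurable_fst).aestronglyMeasurable
      (fun x => norm_truncLog_le hL x.1) hBMO
  have hpair := (four_mul_log_le_integral_fL_mul_truncLog hL).trans (le_abs_self _)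
  rw [NNReal.coe_ofNat] at hdual
  linarith

theorem fL_H1norm_lower :
    ∃ C > (0 : ℝ), ∀ L : ℝ, 2 < L → C * Real.log L ≤ H1norm (fL L) :=
  ⟨1 / 2, by norm_num, fun _ hL => fL_H1norm_lower_general (by linarith)⟩
end
end
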